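/- arXiv:2106.08602 — 8 statements merged into one kernel-verified Lean document; each statement's English description precedes it below -/
import Mathlib

section
/- Every 6-vertex-critical (P6, diamond)-free graph with clique number 3 contains no induced subgraph isomorphic to D1. -/
/-! Suppose `D₁` sits in `G` on the vertices `v₁, …, v₅, b₁, b₂`. Criticality forces every vertex
of `G` to have degree at least 5 (`IsVertexCritical.exists_adj_notMem`), while all degrees in `D₁`
are at most 3, so each of the seven vertices has neighbours outside the copy.

Two local rules restrict how outside vertices attach: an edge lies in at most one triangle
(`common_neighbor_unique`, combining diamond-freeness with the absence of `K₄`), and there is no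
induced `P₆` (`no_induced_P6`). They leave exactly two possible attachments for an outside
neighbour `x` of `b₁`, namely `{b₁, v₅}` and `{b₁, v₁, b₂}` (`attach_b₁`). In the first case no
further vertex can be adjacent to `v₄` (`attach_v₄`), and in the second no further vertex can be
adjacent to `v₃` (`attach_v₃`). Either way some vertex of `G` has degree 3, a contradiction. -/

open SimpleGraph

/-- The diamond graph: `K₄` minus an edge. -/
def diamondGraph : SimpleGraph (Fin 4) :=
  SimpleGraph.fromRel (fun a b =>
    (a, b) ∈ [((0 : Fin 4), (1 : Fin 4)), (0, 2), (0, 3), (1, 2), (1, 3)])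

/-- `G` has no induced subgraph isomorphic to `H`. -/
def InducedFree {W V : Type*} (H : SimpleGraph W) (G : SimpleGraph V) : Prop :=
  ¬ Nonempty (H ↪g G)

/-- `G` is (P₆, diamond)-free: it contains no induced subgraph isomorphic to the
path on six vertices or to the diamond. -/
def P6DiamondFree {V : Type*} (G : SimpleGraph V) : Prop :=
  InducedFree (SimpleGraph.pathGraph 6) G ∧ InducedFree diamondGraph G

/-- `G` is `k`-vertex-critical: `χ(G) = k` and every proper induced subgraph has
chromatic number less than `k`. -/
def IsVertexCritical {V : Type*} (k : ℕ) (G : SimpleGraph V) : Prop :=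
  G.chromaticNumber = (k : ℕ∞) ∧
    ∀ S : Set V, S ≠ Set.univ → (G.induce S).chromaticNumber < (k : ℕ∞)

/-- The graph `D₁`: a five-cycle `v₁…v₅` (vertices `0,…,4`), a vertex `b₁ = 5`
adjacent exactly to `v₂, v₃` (vertices `1, 2`), and a vertex `b₂ = 6` adjacent
exactly to `v₄, v₅` (vertices `3, 4`), with `b₁` and `b₂` nonadjacent. -/
def D1 : SimpleGraph (Fin 7) :=
  SimpleGraph.fromRel (fun a b =>
    (a, b) ∈ [((0 : Fin 7), (1 : Fin 7)), (1, 2), (2, 3), (3, 4), (4, 0),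
      (5, 1), (5, 2), (6, 3), (6, 4)])

/-- In a `k + 1`-vertex-critical graph every vertex has degree at least `k`: a `k`-colouring of
the graph with `v` deleted would otherwise leave a colour free at `v`. -/
lemma IsVertexCritical.exists_adj_notMem {V : Type*} {G : SimpleGraph V} {k : ℕ}
    (hG : IsVertexCritical (k + 1) G) (v : V) (S : Finset V) (hS : S.card < k) :
    ∃ x, G.Adj v x ∧ x ∉ S := by
  classical
  by_contra! h
  have hlt := hG.2 {v}ᶜ (by simp)
  have hcol : (G.induce ({v}ᶜ : Set V)).Colorable k := by
    rw [← chromaticNumber_le_iff_colorable]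
    push_cast at hlt
    exact Order.lt_add_one_iff_of_not_isMax (by simp) |>.1 hlt
  obtain ⟨C⟩ := hcol
  let D : V → Option (Fin k) := fun x => if hx : x ≠ v then some (C ⟨x, hx⟩) else none
  obtain ⟨c, hc⟩ : ∃ c : Fin k, some c ∉ S.image D := by
    by_contra! hall
    have hsub : (Finset.univ : Finset (Fin k)).image some ⊆ S.image D := by
      intro y hy
      obtain ⟨c, -, rfl⟩ := Finset.mem_image.1 hy
      exact hall c
    have h1 := Finset.card_le_card hsub
    rw [Finset.card_image_of_injective _ (Option.some_injective _), Finset.card_univ,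
      Fintype.card_fin] at h1
    have h2 := Finset.card_image_le (s := S) (f := D)
    omega
  have hfree : ∀ x (hx : x ≠ v), G.Adj v x → C ⟨x, hx⟩ ≠ c := by
    intro x hx hadj hxc
    refine hc (Finset.mem_image.2 ⟨x, h x hadj, ?_⟩)
    simp [D, hx, hxc]
  have hcolG : G.Colorable k := by
    refine ⟨Coloring.mk (fun x => if hx : x ≠ v then C ⟨x, hx⟩ else c) ?_⟩
    intro a b hab
    by_cases ha : a = v <;> by_cases hb : b = v
    · subst ha; subst hb; exact absurd hab (G.loopless.irrefl _)
    · subst ha; simpa [hb] using (hfree b hb hab).symm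
    · subst hb; simpa [ha] using hfree a ha hab.symm
    · simpa [ha, hb] using C.valid (v := ⟨a, ha⟩) (w := ⟨b, hb⟩) hab
  have hle := chromaticNumber_le_iff_colorable.2 hcolG
  rw [hG.1] at hle
  have : k + 1 ≤ k := by exact_mod_cast hle
  omega

/-- In a diamond-free graph with clique number 3, an edge lies in at most one triangle. -/
lemma common_neighbor_unique {V : Type*} [Fintype V] {G : SimpleGraph V}
    (hG : InducedFree diamondGraph G) (hω : G.cliqueNum = 3) {a b c d : V} (hab : G.Adj a b)
    (hac : G.Adj a c) (hbc : G.Adj b c) (had : G.Adj a d) (hbd : G.Adj b d) : c = d := by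
  classical
  by_contra hcd
  by_cases hadj : G.Adj c d
  · have h4 : G.IsClique ({a, b, c, d} : Finset V) := by
      simp [isClique_iff, Set.pairwise_insert, hab, hac, hbc, had, hbd, hadj, G.adj_comm _ a,
        G.adj_comm _ b, G.adj_comm d c]
    have := h4.card_le_cliqueNum
    rw [hω] at this
    simp [hab.ne, hac.ne, hbc.ne, had.ne, hbd.ne, hcd] at this
  · have hdc : ¬ G.Adj d c := fun h => hadj h.symm
    refine hG ⟨⟨⟨![a, b, c, d], ?_⟩, ?_⟩⟩
    · intro i j hij
      fin_cases i <;> fin_cases j <;>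
        simp_all [hab.ne, hac.ne, hbc.ne, had.ne, hbd.ne, hab.ne', hac.ne', hbc.ne', had.ne',
          hbd.ne', Ne.symm hcd]
    · intro i j
      change G.Adj (![a, b, c, d] i) (![a, b, c, d] j) ↔ diamondGraph.Adj i j
      fin_cases i <;> fin_cases j <;>
        simp [diamondGraph, hab, hac, hbc, had, hbd, hadj, hab.symm, hac.symm, hbc.symm, had.symm,
          hbd.symm, hdc]

/-- Elementwise form of `P₆`-freeness. Distinctness of the six vertices is automatic, since
distinct vertices of `P₆` have distinct neighbourhoods. -/
lemma no_induced_P6 {V : Type*} {G : SimpleGraph V} (hG : InducedFree (pathGraph 6) G)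
    (a b c d e f : V) :
    ¬ (G.Adj a b ∧ G.Adj b c ∧ G.Adj c d ∧ G.Adj d e ∧ G.Adj e f ∧
      ¬ G.Adj a c ∧ ¬ G.Adj a d ∧ ¬ G.Adj a e ∧ ¬ G.Adj a f ∧ ¬ G.Adj b d ∧ ¬ G.Adj b e ∧
      ¬ G.Adj b f ∧ ¬ G.Adj c e ∧ ¬ G.Adj c f ∧ ¬ G.Adj d f) := by
  rintro ⟨hab, hbc, hcd, hde, hef, hac, had, hae, haf, hbd, hbe, hbf, hce, hcf, hdf⟩
  have hadj : ∀ i j : Fin 6, G.Adj (![a, b, c, d, e, f] i) (![a, b, c, d, e, f] j) ↔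
      (pathGraph 6).Adj i j := by
    intro i j
    fin_cases i <;> fin_cases j <;>
      simp [pathGraph_adj, hab, hbc, hcd, hde, hef, hac, had, hae, haf, hbd, hbe, hbf, hce, hcf,
        hdf, G.adj_comm b a, G.adj_comm c a, G.adj_comm c b, G.adj_comm d a, G.adj_comm d b,
        G.adj_comm d c, G.adj_comm e a, G.adj_comm e b, G.adj_comm e c, G.adj_comm e d,
        G.adj_comm f a, G.adj_comm f b, G.adj_comm f c, G.adj_comm f d, G.adj_comm f e]
  refine hG ⟨⟨⟨![a, b, c, d, e, f], ?_⟩, fun {i j} => hadj i j⟩⟩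
  intro i j hij
  have key : ∀ k, (pathGraph 6).Adj i k ↔ (pathGraph 6).Adj j k := fun k => by
    rw [← hadj, ← hadj, hij]
  simp only [pathGraph_adj] at key
  revert key
  clear hij hadj
  revert i j
  decide

/-- The vertices `v₁, …, v₅, b₁, b₂` induce a copy of `D₁` in `G`. -/
structure IsD1 {V : Type*} (G : SimpleGraph V) (v₁ v₂ v₃ v₄ v₅ b₁ b₂ : V) : Prop where
  cycle : G.Adj v₁ v₂ ∧ G.Adj v₂ v₃ ∧ G.Adj v₃ v₄ ∧ G.Adj v₄ v₅ ∧ G.Adj v₅ v₁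
  chordless : ¬ G.Adj v₁ v₃ ∧ ¬ G.Adj v₁ v₄ ∧ ¬ G.Adj v₂ v₄ ∧ ¬ G.Adj v₂ v₅ ∧ ¬ G.Adj v₃ v₅
  left : G.Adj b₁ v₂ ∧ G.Adj b₁ v₃ ∧ ¬ G.Adj b₁ v₁ ∧ ¬ G.Adj b₁ v₄ ∧ ¬ G.Adj b₁ v₅
  right : G.Adj b₂ v₄ ∧ G.Adj b₂ v₅ ∧ ¬ G.Adj b₂ v₁ ∧ ¬ G.Adj b₂ v₂ ∧ ¬ G.Adj b₂ v₃
  nonadj : ¬ G.Adj b₁ b₂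

section Attachments

variable {V : Type*} [Fintype V] {G : SimpleGraph V} {v₁ v₂ v₃ v₄ v₅ b₁ b₂ : V}

/-- A neighbour of `b₁` other than `v₂, v₃` is attached to the copy of `D₁` along exactly
`{b₁, v₅}` or exactly `{b₁, v₁, b₂}`. -/
lemma attach_b₁ (hG : P6DiamondFree G) (hω : G.cliqueNum = 3)
    (h : IsD1 G v₁ v₂ v₃ v₄ v₅ b₁ b₂) {x : V} (hx : G.Adj x b₁) (hx₂ : x ≠ v₂) (hx₃ : x ≠ v₃) :
    ¬ G.Adj x v₂ ∧ ¬ G.Adj x v₃ ∧ ¬ G.Adj x v₄ ∧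
      (G.Adj x v₅ ∧ ¬ G.Adj x v₁ ∧ ¬ G.Adj x b₂ ∨ ¬ G.Adj x v₅ ∧ G.Adj x v₁ ∧ G.Adj x b₂) := by
  have hU := fun a b c d => common_neighbor_unique hG.2 hω (a := a) (b := b) (c := c) (d := d)
  have hP := no_induced_P6 hG.1
  obtain ⟨hc, hn, hl, hr, hb⟩ := h
  -- The instances below refute every other attachment pattern of `x`.
  have h0 := hU v₂ x v₁ b₁
  have h1 := hU v₃ b₁ v₂ x
  have h2 := hU v₂ v₃ b₁ x
  have h3 := hU v₂ b₁ v₃ x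
  have h4 := hU v₅ x v₁ v₄
  have h5 := hU v₄ b₂ v₅ x
  have h6 := hU v₅ x v₁ b₂
  have h7 := hU v₄ v₅ b₂ x
  have h8 := hP v₁ v₂ v₃ v₄ b₂ x
  have h9 := hP b₂ v₄ v₃ v₂ v₁ x
  have h10 := hP v₁ v₂ b₁ x v₄ b₂
  have h11 := hP v₄ v₅ v₁ v₂ b₁ x
  have h12 := hP v₃ b₁ x v₁ v₅ b₂
  clear hU hP
  grind [G.adj_comm]

/-- If some further neighbour `x` of `b₁` is adjacent to `v₅`, then `v₄` has no neighbours besides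
`v₃, v₅, b₂`. -/
lemma attach_v₄ (hG : P6DiamondFree G) (hω : G.cliqueNum = 3)
    (h : IsD1 G v₁ v₂ v₃ v₄ v₅ b₁ b₂) {x : V} (hx : G.Adj x b₁) (hx₂ : x ≠ v₂) (hx₃ : x ≠ v₃)
    (hx₅ : G.Adj x v₅) {y : V} (hy : G.Adj y v₄) (hy₃ : y ≠ v₃) (hy₅ : y ≠ v₅) (hyb : y ≠ b₂) :
    False := by
  have hx' := attach_b₁ hG hω h hx hx₂ hx₃
  have hU := fun a b c d => common_neighbor_unique hG.2 hω (a := a) (b := b) (c := c) (d := d)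
  have hP := no_induced_P6 hG.1
  obtain ⟨hc, hn, hl, hr, hb⟩ := h
  -- The instances below refute every set of neighbours that `y` could have among the
  -- seven vertices and `x`.
  have h0 := hU v₅ y v₁ v₄
  have h1 := hU v₄ b₂ v₅ y
  have h2 := hU v₃ y v₂ v₄
  have h3 := hU v₄ v₅ b₂ y
  have h4 := hU v₃ b₁ v₂ y
  have h5 := hU v₂ b₁ v₃ y
  have h6 := hP b₂ v₅ v₁ v₂ v₃ y
  have h7 := hP b₁ v₂ v₁ y v₄ b₂
  have h8 := hP v₃ b₁ y v₁ v₅ b₂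
  have h9 := hP v₃ v₂ y x v₅ b₂
  have h10 := hP v₁ v₂ v₃ v₄ y x
  have h11 := hP b₂ v₄ y v₂ b₁ x
  have h12 := hP b₁ v₂ v₁ v₅ v₄ y
  have h13 := hP v₁ v₂ b₁ y v₄ b₂
  clear hU hP
  grind [G.adj_comm]

/-- If some further neighbour `x` of `b₁` is adjacent to `v₁`, then `v₃` has no neighbours besides
`v₂, v₄, b₁`. -/
lemma attach_v₃ (hG : P6DiamondFree G) (hω : G.cliqueNum = 3)
    (h : IsD1 G v₁ v₂ v₃ v₄ v₅ b₁ b₂) {x : V} (hx : G.Adj x b₁) (hx₂ : x ≠ v₂) (hx₃ : x ≠ v₃)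
    (hx₁ : G.Adj x v₁) {y : V} (hy : G.Adj y v₃) (hy₂ : y ≠ v₂) (hy₄ : y ≠ v₄) (hyb : y ≠ b₁) :
    False := by
  have hx' := attach_b₁ hG hω h hx hx₂ hx₃
  have hU := fun a b c d => common_neighbor_unique hG.2 hω (a := a) (b := b) (c := c) (d := d)
  have hP := no_induced_P6 hG.1
  obtain ⟨hc, hn, hl, hr, hb⟩ := h
  -- The instances below refute every set of neighbours that `y` could have among the
  -- seven vertices and `x`.
  have h0 := hU v₂ y v₁ v₃
  have h1 := hU v₃ b₁ v₂ y
  have h2 := hU v₃ y v₂ v₄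
  have h3 := hU v₂ v₃ b₁ y
  have h4 := hU v₄ y v₃ v₅
  have h5 := hU v₄ y v₃ b₂
  have h6 := hU v₅ b₂ v₄ y
  have h7 := hP b₂ v₅ v₁ v₂ v₃ y
  have h8 := hP v₄ b₂ y v₁ v₂ b₁
  have h9 := hP b₁ v₂ v₁ v₅ b₂ y
  have h10 := hP b₁ v₃ y v₁ v₅ b₂
  have h11 := hP v₂ b₁ x y v₅ v₄
  have h12 := hP v₂ v₃ y v₅ b₂ x
  clear hU hP
  grind [G.adj_comm]

end Attachments

/-- Every 6-vertex-critical (P₆, diamond)-free graph with clique number 3 contains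
no induced subgraph isomorphic to `D₁`. -/
theorem six_critical_D1_free {V : Type*} [Fintype V] (G : SimpleGraph V)
    (hG : P6DiamondFree G) (hcrit : IsVertexCritical 6 G)
    (hclique : G.cliqueNum = 3) :
    InducedFree D1 G := by
  classical
  rintro ⟨φ⟩
  have h : IsD1 G (φ 0) (φ 1) (φ 2) (φ 3) (φ 4) (φ 5) (φ 6) := by
    constructor <;> simp only [φ.map_adj_iff] <;> simp [D1]
  obtain ⟨x, hx, hxS⟩ := hcrit.exists_adj_notMem (φ 5) {φ 1, φ 2}
    (Finset.card_le_two.trans_lt (by norm_num))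
  simp only [Finset.mem_insert, Finset.mem_singleton, not_or] at hxS
  obtain ⟨-, -, -, ⟨hx₅, -⟩ | ⟨-, hx₁, -⟩⟩ := attach_b₁ hG hclique h hx.symm hxS.1 hxS.2
  · obtain ⟨y, hy, hyS⟩ := hcrit.exists_adj_notMem (φ 3) {φ 2, φ 4, φ 6}
      (Finset.card_le_three.trans_lt (by norm_num))
    simp only [Finset.mem_insert, Finset.mem_singleton, not_or] at hyS
    exact attach_v₄ hG hclique h hx.symm hxS.1 hxS.2 hx₅ hy.symm hyS.1 hyS.2.1 hyS.2.2
  · obtain ⟨y, hy, hyS⟩ := hcrit.exists_adj_notMem (φ 2) {φ 1, φ 3, φ 5}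
      (Finset.card_le_three.trans_lt (by norm_num))
    simp only [Finset.mem_insert, Finset.mem_singleton, not_or] at hyS
    exact attach_v₃ hG hclique h hx.symm hxS.1 hxS.2 hx₁ hy.symm hyS.1 hyS.2.1 hyS.2.2
end

section
/- Let G be a (P6, diamond)-free graph containing an induced five-cycle Q = {v1,...,v5}, with the associated sets A_i, B_{i,i+1}, C_{i,i+2} (indices modulo 5). If A_i, B_{i+1,i+2} and B_{i+3,i+4} are all nonempty, then C_{i+1,i+3} is anti-complete to A_{i+2}, and C_{i+2,i+4} is anti-complete to A_{i+3}. -/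
/-!
By rotating and reflecting the five-cycle, both claims reduce to one: if `a ∈ A₀`, `b ∈ B₁₂`,
`e ∈ B₃₄`, then no `c ∈ C₁₃` is adjacent to a `d ∈ A₂`.

Suppose `c` and `d` are adjacent. Excluding the diamonds on `{v₁, b, v₂, c}` and `{v₃, e, v₄, c}`
shows that `c` is adjacent to neither `b` nor `e`. Induced six-vertex paths running through the
cycle then force adjacencies one at a time: `ae`, `ab`, `ad`, `ac` (from the path
`b a v₀ v₄ v₃ c`), and `de`. Now `a, d, e, c` span all edges except `ec`, which is a diamond.
-/

open SimpleGraph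

/-- `v` lists, in cyclic order, the vertices of an induced five-cycle in `G`. -/
def IsInducedC5 {V : Type*} (G : SimpleGraph V) (v : Fin 5 → V) : Prop :=
  Function.Injective v ∧ ∀ i j, G.Adj (v i) (v j) ↔ (j = i + 1 ∨ i = j + 1)

/-- `A_i`: vertices outside `Q` whose neighbourhood in `Q` is exactly `{v_i}`. -/
def setA {V : Type*} (G : SimpleGraph V) (v : Fin 5 → V) (i : Fin 5) : Set V :=
  {x | x ∉ Set.range v ∧ ∀ j, G.Adj x (v j) ↔ j = i}

/-- `B_{i,i+1}`: vertices outside `Q` whose neighbourhood in `Q` is exactly `{v_i, v_{i+1}}`. -/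
def setB {V : Type*} (G : SimpleGraph V) (v : Fin 5 → V) (i : Fin 5) : Set V :=
  {x | x ∉ Set.range v ∧ ∀ j, G.Adj x (v j) ↔ (j = i ∨ j = i + 1)}

/-- `C_{i,i+2}`: vertices outside `Q` whose neighbourhood in `Q` is exactly `{v_i, v_{i+2}}`. -/
def setC {V : Type*} (G : SimpleGraph V) (v : Fin 5 → V) (i : Fin 5) : Set V :=
  {x | x ∉ Set.range v ∧ ∀ j, G.Adj x (v j) ↔ (j = i ∨ j = i + 2)}

/-- `Z`: vertices outside `Q` with no neighbour in `Q`. -/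
def setZ {V : Type*} (G : SimpleGraph V) (v : Fin 5 → V) : Set V :=
  {x | x ∉ Set.range v ∧ ∀ j, ¬ G.Adj x (v j)}

/-- `X` is anti-complete to `Y`: there are no edges between `X` and `Y`. -/
def Anticomplete {V : Type*} (G : SimpleGraph V) (X Y : Set V) : Prop :=
  ∀ x ∈ X, ∀ y ∈ Y, ¬ G.Adj x y

/-- `X` is complete to `Y`: every vertex of `X` is adjacent to every vertex of `Y`. -/
def CompleteTo {V : Type*} (G : SimpleGraph V) (X Y : Set V) : Prop :=
  ∀ x ∈ X, ∀ y ∈ Y, G.Adj x y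

/-- No four vertices span all edges except `zw`, in a diamond-free graph. -/
theorem no_diamond {V : Type*} {G : SimpleGraph V} (hG : P6DiamondFree G) {x y z w : V}
    (hzw : z ≠ w) (xy : G.Adj x y) (xz : G.Adj x z) (xw : G.Adj x w) (yz : G.Adj y z)
    (yw : G.Adj y w) (zw : ¬ G.Adj z w) : False := by
  refine hG.2 ⟨⟨⟨![x, y, z, w], ?_⟩, ?_⟩⟩
  · intro i j h
    fin_cases i <;> fin_cases j <;>
      simp_all [xy.ne, xz.ne, xw.ne, yz.ne, yw.ne, xy.ne', xz.ne', xw.ne', yz.ne', yw.ne', hzw.symm]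
  · intro i j
    change G.Adj (![x, y, z, w] i) (![x, y, z, w] j) ↔ _
    fin_cases i <;> fin_cases j <;> simp_all [diamondGraph, G.adj_comm]

/-- No six vertices span exactly the edges of a path, in a `P₆`-free graph. Distinctness of the
vertices follows from the adjacency pattern, since no two vertices of `P₆` have the same
neighbourhood. -/
theorem no_path {V : Type*} {G : SimpleGraph V} (hG : P6DiamondFree G) (f : Fin 6 → V)
    (h : ∀ i j : Fin 6, i < j → (G.Adj (f i) (f j) ↔ i.val + 1 = j.val)) : False := by
  have hadj : ∀ i j, G.Adj (f i) (f j) ↔ (SimpleGraph.pathGraph 6).Adj i j := by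
    intro i j
    rw [SimpleGraph.pathGraph_adj]
    rcases lt_trichotomy i j with hij | rfl | hij
    · rw [h i j hij]
      have : i.val < j.val := hij
      omega
    · simp
    · rw [G.adj_comm, h j i hij]
      have : j.val < i.val := hij
      omega
  refine hG.1 ⟨⟨⟨f, ?_⟩, hadj _ _⟩⟩
  have key : ∀ i j : Fin 6,
      (∀ k : Fin 6, (i.val + 1 = k.val ∨ k.val + 1 = i.val) ↔
        (j.val + 1 = k.val ∨ k.val + 1 = j.val)) → i = j := by decide
  intro i j hij
  refine key i j fun k => ?_
  rw [← SimpleGraph.pathGraph_adj, ← SimpleGraph.pathGraph_adj, ← hadj, ← hadj, hij]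

/-- The first claim at `i = 0`. -/
theorem anticomplete_zero {V : Type*} {G : SimpleGraph V} (hG : P6DiamondFree G) {v : Fin 5 → V}
    (hv : IsInducedC5 G v) (hA : (setA G v 0).Nonempty) (hB1 : (setB G v 1).Nonempty)
    (hB2 : (setB G v 3).Nonempty) : Anticomplete G (setC G v 1) (setA G v 2) := by
  obtain ⟨a, -, ha⟩ := hA
  obtain ⟨b, -, hb⟩ := hB1
  obtain ⟨e, -, he⟩ := hB2
  rintro c ⟨hcQ, hc⟩ d ⟨-, hd⟩ cd
  have hv' := hv.2
  have hne : ∀ {x y z : V}, G.Adj x z → ¬ G.Adj y z → x ≠ y := by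
    rintro x y z h h' rfl
    exact h' h
  have hb' : ∀ j, G.Adj (v j) b ↔ (j = 1 ∨ j = 1 + 1) := fun j => by rw [G.adj_comm, hb]
  have hc' : ∀ j, G.Adj (v j) c ↔ (j = 1 ∨ j = 1 + 2) := fun j => by rw [G.adj_comm, hc]
  have hd' : ∀ j, G.Adj (v j) d ↔ j = 2 := fun j => by rw [G.adj_comm, hd]
  have he' : ∀ j, G.Adj (v j) e ↔ (j = 3 ∨ j = 3 + 1) := fun j => by rw [G.adj_comm, he]
  have bc : ¬ G.Adj b c := fun bc =>
    no_diamond hG (x := v 1) (y := b) (z := v 2) (w := c) (fun h => hcQ ⟨2, h⟩)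
      (by simp [hb']) (by simp [hv']) (by simp [hc']) (by simp [hb]) bc (by simp [hc'])
  have ec : ¬ G.Adj e c := fun ec =>
    no_diamond hG (x := v 3) (y := e) (z := v 4) (w := c) (fun h => hcQ ⟨4, h⟩)
      (by simp [he']) (by simp [hv']) (by simp [hc']) (by simp [he]) ec (by simp [hc'])
  have ae : G.Adj a e := by
    by_contra h
    refine no_path hG ![a, v 0, v 1, v 2, v 3, e] fun i j hij => ?_
    fin_cases i <;> fin_cases j <;> first
      | exact absurd hij (by decide)
      | simp [hv', ha, he', h]
  have ab : G.Adj a b := by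
    by_contra h
    refine no_path hG ![a, v 0, v 4, v 3, v 2, b] fun i j hij => ?_
    fin_cases i <;> fin_cases j <;> first
      | exact absurd hij (by decide)
      | simp [hv', ha, hb', h]
  have ad : G.Adj a d := by
    by_contra h
    refine no_path hG ![a, v 0, v 4, v 3, v 2, d] fun i j hij => ?_
    fin_cases i <;> fin_cases j <;> first
      | exact absurd hij (by decide)
      | simp [hv', ha, hd', h]
  have ac : G.Adj a c := by
    by_contra h
    refine no_path hG ![b, a, v 0, v 4, v 3, c] fun i j hij => ?_
    fin_cases i <;> fin_cases j <;> first
      | exact absurd hij (by decide)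
      | simp [hv', ha, hb, hc', ab.symm, bc, h]
  have de : G.Adj d e := by
    by_contra h
    have h' : ¬ G.Adj e d := fun h' => h h'.symm
    refine no_path hG ![e, v 4, v 0, v 1, v 2, d] fun i j hij => ?_
    fin_cases i <;> fin_cases j <;> first
      | exact absurd hij (by decide)
      | simp [hv', he, hd', h']
  exact no_diamond hG (x := a) (y := d) (z := e) (w := c) (hne (z := v 4) (by simp [he])
    (by simp [hc])) ad ae ac de cd.symm ec

/-- If `A_i`, `B_{i+1,i+2}` and `B_{i+3,i+4}` are all nonempty, then `C_{i+1,i+3}`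
is anti-complete to `A_{i+2}` and `C_{i+2,i+4}` is anti-complete to `A_{i+3}`. -/
theorem property22 {V : Type*} [Fintype V] (G : SimpleGraph V)
    (hG : P6DiamondFree G) (v : Fin 5 → V) (hv : IsInducedC5 G v) (i : Fin 5)
    (hA : (setA G v i).Nonempty) (hB1 : (setB G v (i + 1)).Nonempty)
    (hB2 : (setB G v (i + 3)).Nonempty) :
    Anticomplete G (setC G v (i + 1)) (setA G v (i + 2)) ∧
      Anticomplete G (setC G v (i + 2)) (setA G v (i + 3)) := by
  -- Relabel the cycle so that `v i` becomes the zeroth vertex.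
  obtain ⟨a, haQ, ha⟩ := hA
  obtain ⟨b, hbQ, hb⟩ := hB1
  obtain ⟨e, heQ, he⟩ := hB2
  constructor
  · have hr : Set.range (fun j => v (i + j)) = Set.range v :=
      (Equiv.addLeft i).surjective.range_comp v
    have hw : IsInducedC5 G (fun j => v (i + j)) :=
      ⟨hv.1.comp (add_right_injective i), fun j k => by rw [hv.2]; clear * -; decide +revert⟩
    have key := anticomplete_zero hG hw
      ⟨a, hr ▸ haQ, fun j => by rw [ha]; clear * -; decide +revert⟩
      ⟨b, hr ▸ hbQ, fun j => by rw [hb]; clear * -; decide +revert⟩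
      ⟨e, hr ▸ heQ, fun j => by rw [he]; clear * -; decide +revert⟩
    rintro c ⟨hcQ, hc⟩ d ⟨hdQ, hd⟩
    exact key c ⟨hr ▸ hcQ, fun j => by rw [hc]; clear * -; decide +revert⟩
      d ⟨hr ▸ hdQ, fun j => by rw [hd]; clear * -; decide +revert⟩
  -- Reversing the orientation swaps the roles of the two sets `B`.
  · have hr : Set.range (fun j => v (i - j)) = Set.range v :=
      (Equiv.subLeft i).surjective.range_comp v
    have hw : IsInducedC5 G (fun j => v (i - j)) :=
      ⟨hv.1.comp (sub_right_injective), fun j k => by rw [hv.2]; clear * -; decide +revert⟩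
    have key := anticomplete_zero hG hw
      ⟨a, hr ▸ haQ, fun j => by rw [ha]; clear * -; decide +revert⟩
      ⟨e, hr ▸ heQ, fun j => by rw [he]; clear * -; decide +revert⟩
      ⟨b, hr ▸ hbQ, fun j => by rw [hb]; clear * -; decide +revert⟩
    rintro c ⟨hcQ, hc⟩ d ⟨hdQ, hd⟩
    exact key c ⟨hr ▸ hcQ, fun j => by rw [hc]; clear * -; decide +revert⟩
      d ⟨hr ▸ hdQ, fun j => by rw [hd]; clear * -; decide +revert⟩
end

section
/- Let G be a (P6, diamond)-free graph containing an induced five-cycle Q = {v1,...,v5}, with the associated sets A_i, B_{i,i+1}, C_{i,i+2} (indices modulo 5). Suppose B_{i,i+1} is nonempty. Then C_{i,i+2} ∪ C_{i-2,i} is complete to A_{i-1}, and C_{i-1,i+1} ∪ C_{i+1,i+3} is complete to A_{i+2}. Moreover, if A_{i-1} is nonempty then C_{i,i+2} and C_{i-2,i} are anti-complete to each other, and if A_{i+2} is nonempty then C_{i-1,i+1} and C_{i+1,i+3} are anti-complete to each other. -/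
/-!
Write the cycle as `v₀ v₁ v₂ v₃ v₄` with `i = 0`, and take `b ∈ B_{0,1}`. A vertex `a ∈ A_4` is
adjacent to `b`, since otherwise `a v₄ v₃ v₂ v₁ b` is an induced `P₆`. A vertex
`c ∈ C_{0,2} ∪ C_{3,0}` is not adjacent to `b`, since otherwise `v₀, b, v₁, c` induce a diamond.
If `a` and `c` were not adjacent, then `v₄ a b v₁ v₂ c` (for `c ∈ C_{0,2}`) or `a b v₁ v₂ v₃ c`
(for `c ∈ C_{3,0}`) would be an induced `P₆`. Finally, adjacent `c ∈ C_{0,2}` and `c' ∈ C_{3,0}`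
would have the two nonadjacent common neighbours `a` and `v₀`, which is a diamond.

The claims about `A_2` follow from those about `A_4` by the reflection `j ↦ 1 - j` of the cycle.
-/

open SimpleGraph

/-- Consecutive adjacencies and the ten nonadjacencies suffice to exclude an induced path:
distinctness of the six vertices is automatic, because distinct vertices of `P₆` have distinct
neighbourhoods. -/
lemma no_induced_P6_s11 {V : Type*} {G : SimpleGraph V} (hG : P6DiamondFree G) {a b c d e f : V}
    (hab : G.Adj a b) (hbc : G.Adj b c) (hcd : G.Adj c d) (hde : G.Adj d e) (hef : G.Adj e f)
    (hac : ¬ G.Adj a c) (had : ¬ G.Adj a d) (hae : ¬ G.Adj a e) (haf : ¬ G.Adj a f)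
    (hbd : ¬ G.Adj b d) (hbe : ¬ G.Adj b e) (hbf : ¬ G.Adj b f)
    (hce : ¬ G.Adj c e) (hcf : ¬ G.Adj c f) (hdf : ¬ G.Adj d f) : False := by
  have hadj : ∀ i j : Fin 6, G.Adj (![a, b, c, d, e, f] i) (![a, b, c, d, e, f] j) ↔
      (SimpleGraph.pathGraph 6).Adj i j := by
    intro i j
    rw [SimpleGraph.pathGraph_adj]
    fin_cases i <;> fin_cases j <;> simp [*, G.adj_comm]
  refine hG.1 ⟨⟨⟨![a, b, c, d, e, f], ?_⟩, @fun i j => hadj i j⟩⟩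
  intro i j hij
  have htwin : ∀ k, (SimpleGraph.pathGraph 6).Adj i k ↔ (SimpleGraph.pathGraph 6).Adj j k := by
    intro k
    rw [← hadj, ← hadj, hij]
  simp only [SimpleGraph.pathGraph_adj] at htwin
  clear hij
  revert i j
  decide

lemma no_induced_diamond {V : Type*} {G : SimpleGraph V} (hG : P6DiamondFree G) {a b x y : V}
    (hab : G.Adj a b) (hax : G.Adj a x) (hay : G.Adj a y) (hbx : G.Adj b x) (hby : G.Adj b y)
    (hne : x ≠ y) (hxy : ¬ G.Adj x y) : False := by
  refine hG.2 ⟨⟨⟨![a, b, x, y], ?_⟩, ?_⟩⟩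
  · intro i j hij
    have := hab.ne
    have := hax.ne
    have := hay.ne
    have := hbx.ne
    have := hby.ne
    fin_cases i <;> fin_cases j <;> simp_all
  · intro i j
    have := hab.symm
    have := hax.symm
    have := hay.symm
    have := hbx.symm
    have := hby.symm
    have : ¬ G.Adj y x := fun h => hxy h.symm
    change G.Adj (![a, b, x, y] i) (![a, b, x, y] j) ↔ diamondGraph.Adj i j
    fin_cases i <;> fin_cases j <;> simp [diamondGraph, *]

/-- The part of the theorem concerning `A_{i-1}`, in the case `i = 0` and with vertices
`b ∈ B_{0,1}` and `a ∈ A_4` fixed. -/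
lemma core {V : Type*} {G : SimpleGraph V} (hG : P6DiamondFree G) {v : Fin 5 → V}
    (hv : IsInducedC5 G v) {b a : V} (hb : b ∈ setB G v 0) (ha : a ∈ setA G v 4) :
    (∀ c ∈ setC G v 0, G.Adj c a) ∧ (∀ c ∈ setC G v 3, G.Adj c a) ∧
    (∀ c ∈ setC G v 0, ∀ c' ∈ setC G v 3, ¬ G.Adj c c') := by
  have hvv := hv.2
  have hbv := hb.2
  have hav := ha.2
  have hvb : ∀ j, G.Adj (v j) b ↔ (j = 0 ∨ j = 0 + 1) := fun j => by rw [G.adj_comm, hbv]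
  have hva : ∀ j, G.Adj (v j) a ↔ j = 4 := fun j => by rw [G.adj_comm, hav]
  have hab : G.Adj a b := by
    by_contra h
    apply no_induced_P6_s11 hG (a := a) (b := v 4) (c := v 3) (d := v 2) (e := v 1) (f := b) <;>
      first
        | assumption
        | (simp only [hvv, hav, hvb] <;> decide)
  -- A neighbour of `v 0` that misses `v 1` is nonadjacent to `b`.
  have hbc : ∀ c, c ∉ Set.range v → G.Adj c (v 0) → ¬ G.Adj c (v 1) → ¬ G.Adj b c := by
    intro c hc h0 h1 h
    refine no_induced_diamond hG (a := v 0) (b := b) (x := v 1) (y := c) ?_ ?_ h0.symm ?_ h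
      (fun e => hc ⟨1, e⟩) (fun e => h1 e.symm)
    all_goals simp only [hvv, hbv, hvb]; decide
  have hC0 : ∀ c ∈ setC G v 0, G.Adj c a := by
    intro c hc
    have hcv := hc.2
    have hvc : ∀ j, G.Adj (v j) c ↔ (j = 0 ∨ j = 0 + 2) := fun j => by rw [G.adj_comm, hcv]
    have hnbc : ¬ G.Adj b c :=
      hbc c hc.1 ((hcv _).2 (by decide)) (fun e => absurd ((hcv _).1 e) (by decide))
    by_contra h
    have hac : ¬ G.Adj a c := fun e => h e.symm
    apply no_induced_P6_s11 hG (a := v 4) (b := a) (c := b) (d := v 1) (e := v 2) (f := c) <;>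
      first
        | assumption
        | (simp only [hvv, hav, hbv, hva, hvb, hvc] <;> decide)
  have hC3 : ∀ c ∈ setC G v 3, G.Adj c a := by
    intro c hc
    have hcv := hc.2
    have hvc : ∀ j, G.Adj (v j) c ↔ (j = 3 ∨ j = 3 + 2) := fun j => by rw [G.adj_comm, hcv]
    have hnbc : ¬ G.Adj b c :=
      hbc c hc.1 ((hcv _).2 (by decide)) (fun e => absurd ((hcv _).1 e) (by decide))
    by_contra h
    have hac : ¬ G.Adj a c := fun e => h e.symm
    apply no_induced_P6_s11 hG (a := a) (b := b) (c := v 1) (d := v 2) (e := v 3) (f := c) <;>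
      first
        | assumption
        | (simp only [hvv, hav, hbv, hvc] <;> decide)
  refine ⟨hC0, hC3, fun c hc c' hc' h => ?_⟩
  refine no_induced_diamond hG h (hC0 c hc) (y := v 0) ?_ (hC3 c' hc') ?_
    (fun e => ha.1 ⟨0, e.symm⟩) ?_
  · rw [hc.2]; decide
  · rw [hc'.2]; decide
  · rw [hav]; decide

/-- Effect on `A_i` of relabelling the cycle along `σ`; below, `σ` is a rotation or a reflection. -/
lemma setA_relabel {V : Type*} (G : SimpleGraph V) (v : Fin 5 → V) {σ : Fin 5 → Fin 5}
    (hσ : σ.Surjective) {i k : Fin 5} (h : ∀ j, σ j = i ↔ j = k) :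
    setA G (v ∘ σ) k = setA G v i := by
  ext x
  refine and_congr (by rw [hσ.range_comp]) ?_
  exact (forall_congr' fun j => by rw [← h j]; rfl).trans hσ.forall.symm

lemma setB_relabel {V : Type*} (G : SimpleGraph V) (v : Fin 5 → V) {σ : Fin 5 → Fin 5}
    (hσ : σ.Surjective) {i k : Fin 5} (h : ∀ j, (σ j = i ∨ σ j = i + 1) ↔ (j = k ∨ j = k + 1)) :
    setB G (v ∘ σ) k = setB G v i := by
  ext x
  refine and_congr (by rw [hσ.range_comp]) ?_
  exact (forall_congr' fun j => by rw [← h j]; rfl).trans hσ.forall.symm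

lemma setC_relabel {V : Type*} (G : SimpleGraph V) (v : Fin 5 → V) {σ : Fin 5 → Fin 5}
    (hσ : σ.Surjective) {i k : Fin 5} (h : ∀ j, (σ j = i ∨ σ j = i + 2) ↔ (j = k ∨ j = k + 2)) :
    setC G (v ∘ σ) k = setC G v i := by
  ext x
  refine and_congr (by rw [hσ.range_comp]) ?_
  exact (forall_congr' fun j => by rw [← h j]; rfl).trans hσ.forall.symm

/-- Suppose `B_{i,i+1}` is nonempty. Then `C_{i,i+2} ∪ C_{i−2,i}` is complete to
`A_{i−1}`, and `C_{i−1,i+1} ∪ C_{i+1,i+3}` is complete to `A_{i+2}`. Moreover, if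
`A_{i−1}` is nonempty then `C_{i,i+2}` and `C_{i−2,i}` are anti-complete, and if
`A_{i+2}` is nonempty then `C_{i−1,i+1}` and `C_{i+1,i+3}` are anti-complete.
(Here `i − 2 = i + 3` and `i − 1 = i + 4` modulo 5.) -/
theorem property23 {V : Type*} [Fintype V] (G : SimpleGraph V)
    (hG : P6DiamondFree G) (v : Fin 5 → V) (hv : IsInducedC5 G v) (i : Fin 5)
    (hB : (setB G v i).Nonempty) :
    CompleteTo G (setC G v i ∪ setC G v (i + 3)) (setA G v (i + 4)) ∧
    CompleteTo G (setC G v (i + 4) ∪ setC G v (i + 1)) (setA G v (i + 2)) ∧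
    ((setA G v (i + 4)).Nonempty → Anticomplete G (setC G v i) (setC G v (i + 3))) ∧
    ((setA G v (i + 2)).Nonempty →
      Anticomplete G (setC G v (i + 4)) (setC G v (i + 1))) := by
  obtain ⟨b, hb⟩ := hB
  have hrot (a) (ha : a ∈ setA G v (i + 4)) :
      (∀ c ∈ setC G v i, G.Adj c a) ∧ (∀ c ∈ setC G v (i + 3), G.Adj c a) ∧
      (∀ c ∈ setC G v i, ∀ c' ∈ setC G v (i + 3), ¬ G.Adj c c') := by
    have hσ : Function.Bijective (fun j : Fin 5 => i + j) := by clear * -; revert i; decide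
    have hC0 := setC_relabel G v hσ.2 (i := i) (k := 0) (by clear * -; revert i; decide)
    have hC3 := setC_relabel G v hσ.2 (i := i + 3) (k := 3) (by clear * -; revert i; decide)
    rw [← hC0, ← hC3]
    refine core hG ⟨hv.1.comp hσ.1, fun j k => (hv.2 _ _).trans ?_⟩ (b := b) ?_ ?_
    · clear * -; revert i; decide +revert
    · rwa [setB_relabel G v hσ.2 (i := i) (k := 0) (by clear * -; revert i; decide)]
    · rwa [setA_relabel G v hσ.2 (i := i + 4) (k := 4) (by clear * -; revert i; decide)]
  -- The reflection `j ↦ i + 1 - j` fixes `B_{i,i+1}` and carries `A_{i-1}` to `A_{i+2}`.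
  have hrefl (a) (ha : a ∈ setA G v (i + 2)) :
      (∀ c ∈ setC G v (i + 4), G.Adj c a) ∧ (∀ c ∈ setC G v (i + 1), G.Adj c a) ∧
      (∀ c ∈ setC G v (i + 4), ∀ c' ∈ setC G v (i + 1), ¬ G.Adj c c') := by
    have hσ : Function.Bijective (fun j : Fin 5 => i + 1 - j) := by clear * -; revert i; decide
    have hC0 := setC_relabel G v hσ.2 (i := i + 4) (k := 0) (by clear * -; revert i; decide)
    have hC3 := setC_relabel G v hσ.2 (i := i + 1) (k := 3) (by clear * -; revert i; decide)
    rw [← hC0, ← hC3]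
    refine core hG ⟨hv.1.comp hσ.1, fun j k => (hv.2 _ _).trans ?_⟩ (b := b) ?_ ?_
    · clear * -; revert i; decide +revert
    · rwa [setB_relabel G v hσ.2 (i := i) (k := 0) (by clear * -; revert i; decide)]
    · rwa [setA_relabel G v hσ.2 (i := i + 2) (k := 4) (by clear * -; revert i; decide)]
  refine ⟨?_, ?_, ?_, ?_⟩
  · rintro c (hc | hc) a ha
    · exact (hrot a ha).1 c hc
    · exact (hrot a ha).2.1 c hc
  · rintro c (hc | hc) a ha
    · exact (hrefl a ha).1 c hc
    · exact (hrefl a ha).2.1 c hc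
  · rintro ⟨a, ha⟩
    exact (hrot a ha).2.2
  · rintro ⟨a, ha⟩
    exact (hrefl a ha).2.2
end

section
/- Let G be a (P6, diamond)-free graph containing an induced five-cycle Q = {v1,...,v5}, with the associated sets A_i, B_{i,i+1} (indices modulo 5). If A_i ∪ A_{i+1} is nonempty, then B_{i,i+1} is complete to A_{i+3}. Moreover, if B_{i,i+1} contains two or more vertices, then A_{i+3} is empty. -/
/-!
Write `i = 1`, and let `a ∈ A₁`, `b ∈ B₁₂`, `c ∈ A₄`.

* `a` and `c` are adjacent, since otherwise `a, v₁, v₂, v₃, v₄, c` is an induced `P₆`.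
* `a` and `b` are nonadjacent, since otherwise `{v₁, b, a, v₂}` induces a diamond.
* Hence `b` and `c` are adjacent, since otherwise `b, v₂, v₃, v₄, c, a` is an induced `P₆`.

The case `a ∈ A₂` is the mirror image under the reflection of `Q` that swaps `v₁` with `v₂` and
`v₃` with `v₅`; `adj_of_path` treats both at once, mentioning only the four vertices
of `Q` on the path used. For the second claim, two vertices `b, b'` of `B₁₂` are adjacent, since
otherwise `{v₁, v₂, b, b'}` induces a diamond; as both are adjacent to any `c ∈ A₄`, the set
`{b, b', c, v₁}` would induce a diamond.
-/

open SimpleGraph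

/-- Injectivity of the embedding is automatic, as no two vertices of `P₆` have the same
neighbourhood. -/
lemma not_induced_path {V : Type*} {G : SimpleGraph V}
    (h : InducedFree (SimpleGraph.pathGraph 6) G) {x₀ x₁ x₂ x₃ x₄ x₅ : V}
    (e₀₁ : G.Adj x₀ x₁) (e₁₂ : G.Adj x₁ x₂) (e₂₃ : G.Adj x₂ x₃) (e₃₄ : G.Adj x₃ x₄)
    (e₄₅ : G.Adj x₄ x₅)
    (n₀₂ : ¬ G.Adj x₀ x₂) (n₀₃ : ¬ G.Adj x₀ x₃) (n₀₄ : ¬ G.Adj x₀ x₄) (n₀₅ : ¬ G.Adj x₀ x₅)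
    (n₁₃ : ¬ G.Adj x₁ x₃) (n₁₄ : ¬ G.Adj x₁ x₄) (n₁₅ : ¬ G.Adj x₁ x₅)
    (n₂₄ : ¬ G.Adj x₂ x₄) (n₂₅ : ¬ G.Adj x₂ x₅) (n₃₅ : ¬ G.Adj x₃ x₅) : False := by
  let f : Fin 6 → V := ![x₀, x₁, x₂, x₃, x₄, x₅]
  have hf : ∀ i j, G.Adj (f i) (f j) ↔ (i.val + 1 = j.val ∨ j.val + 1 = i.val) := by
    intro i j
    fin_cases i <;> fin_cases j <;> simp [f, *, G.adj_comm x₁ x₀, G.adj_comm x₂ x₀,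
      G.adj_comm x₃ x₀, G.adj_comm x₄ x₀, G.adj_comm x₅ x₀, G.adj_comm x₂ x₁, G.adj_comm x₃ x₁,
      G.adj_comm x₄ x₁, G.adj_comm x₅ x₁, G.adj_comm x₃ x₂, G.adj_comm x₄ x₂, G.adj_comm x₅ x₂,
      G.adj_comm x₄ x₃, G.adj_comm x₅ x₃, G.adj_comm x₅ x₄]
  have twin : ∀ i j : Fin 6, (∀ k : Fin 6, (i.val + 1 = k.val ∨ k.val + 1 = i.val) ↔
      (j.val + 1 = k.val ∨ k.val + 1 = j.val)) → i = j := by decide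
  refine h ⟨⟨⟨f, fun i j hij => twin i j fun k => ?_⟩, ?_⟩⟩
  · rw [← hf i k, ← hf j k, hij]
  · intro i j
    rw [SimpleGraph.pathGraph_adj]
    exact hf i j

/-- Two adjacent vertices `a, b` with distinct nonadjacent common neighbours `c, d` induce a
diamond. -/
lemma not_induced_diamond {V : Type*} {G : SimpleGraph V} (h : InducedFree diamondGraph G)
    {a b c d : V} (ab : G.Adj a b) (ac : G.Adj a c) (ad : G.Adj a d) (bc : G.Adj b c)
    (bd : G.Adj b d) (ncd : ¬ G.Adj c d) (hcd : c ≠ d) : False := by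
  have hinj : Function.Injective ![a, b, c, d] := by
    intro i j hij
    fin_cases i <;> fin_cases j <;>
      simp_all [ab.ne, ab.ne', ac.ne, ac.ne', ad.ne, ad.ne', bc.ne, bc.ne', bd.ne, bd.ne',
        hcd.symm]
  refine h ⟨⟨⟨![a, b, c, d], hinj⟩, ?_⟩⟩
  intro i j
  fin_cases i <;> fin_cases j <;>
    simp [diamondGraph, ab, ac, ad, bc, bd, ncd, ab.symm, ac.symm, ad.symm, bc.symm, bd.symm,
      G.adj_comm d c]

/-- Here `p, q, r, s` is the induced path on four vertices of the five-cycle with `a` attached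
at `p`, `c` attached at `s`, and `b` attached at both `p` and `q`. -/
lemma adj_of_path {V : Type*} {G : SimpleGraph V} (hG : P6DiamondFree G) {p q r s a b c : V}
    (pq : G.Adj p q) (qr : G.Adj q r) (rs : G.Adj r s)
    (pr : ¬ G.Adj p r) (ps : ¬ G.Adj p s) (qs : ¬ G.Adj q s)
    (ap : G.Adj a p) (aq : ¬ G.Adj a q) (ar : ¬ G.Adj a r) (as : ¬ G.Adj a s)
    (bp : G.Adj b p) (bq : G.Adj b q) (br : ¬ G.Adj b r) (bs : ¬ G.Adj b s)
    (cp : ¬ G.Adj c p) (cq : ¬ G.Adj c q) (cr : ¬ G.Adj c r) (cs : G.Adj c s) :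
    G.Adj b c := by
  by_contra bc
  have ac : G.Adj a c := by
    by_contra ac
    exact not_induced_path hG.1 ap pq qr rs cs.symm aq ar as ac pr ps
      (fun h => cp h.symm) qs (fun h => cq h.symm) (fun h => cr h.symm)
  have ab : ¬ G.Adj b a := by
    intro ab
    exact not_induced_diamond hG.2 bp.symm ap.symm pq ab bq aq fun h => ar (h ▸ qr)
  exact not_induced_path hG.1 bq qr rs cs.symm ac.symm br bs bc ab qs
    (fun h => cq h.symm) (fun h => aq h.symm) (fun h => cr h.symm) (fun h => ar h.symm)
    (fun h => as h.symm)

/-- If `A_i ∪ A_{i+1}` is nonempty, then `B_{i,i+1}` is complete to `A_{i+3}`.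
Moreover, if `B_{i,i+1}` contains two or more vertices, then `A_{i+3}` is empty. -/
theorem property24 {V : Type*} [Fintype V] (G : SimpleGraph V)
    (hG : P6DiamondFree G) (v : Fin 5 → V) (hv : IsInducedC5 G v) (i : Fin 5)
    (hA : (setA G v i ∪ setA G v (i + 1)).Nonempty) :
    CompleteTo G (setB G v i) (setA G v (i + 3)) ∧
      ((setB G v i).Nontrivial → setA G v (i + 3) = ∅) := by
  have hcomplete : CompleteTo G (setB G v i) (setA G v (i + 3)) := by
    rintro b ⟨-, hb⟩ c ⟨-, hc⟩
    obtain ⟨a, ⟨-, ha⟩ | ⟨-, ha⟩⟩ := hA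
    · apply adj_of_path hG (p := v i) (q := v (i + 1)) (r := v (i + 2)) (s := v (i + 3)) (a := a)
      all_goals
        simp only [hv.2, ha, hb, hc] <;>
        · clear * -
          revert i
          decide
    · apply adj_of_path hG (p := v (i + 1)) (q := v i) (r := v (i + 4)) (s := v (i + 3)) (a := a)
      all_goals
        simp only [hv.2, ha, hb, hc] <;>
        · clear * -
          revert i
          decide
  refine ⟨hcomplete, ?_⟩
  rintro ⟨b, hb, b', hb', hne⟩
  refine Set.eq_empty_iff_forall_notMem.mpr fun c hc => ?_
  have bc := hcomplete b hb c hc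
  have bc' := hcomplete b' hb' c hc
  have bp : G.Adj b (v i) := (hb.2 i).2 (Or.inl rfl)
  have bq : G.Adj b (v (i + 1)) := (hb.2 _).2 (Or.inr rfl)
  have bp' : G.Adj b' (v i) := (hb'.2 i).2 (Or.inl rfl)
  have bq' : G.Adj b' (v (i + 1)) := (hb'.2 _).2 (Or.inr rfl)
  have pq : G.Adj (v i) (v (i + 1)) := (hv.2 _ _).2 (Or.inl rfl)
  have bb : G.Adj b b' := by
    by_contra bb
    exact not_induced_diamond hG.2 pq bp.symm bp'.symm bq.symm bq'.symm bb hne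
  have cp : ¬ G.Adj c (v i) := by
    rw [hc.2 i]
    clear * -
    revert i
    decide
  exact not_induced_diamond hG.2 bb bc bp bc' bp' cp fun h => hc.1 ⟨i, h.symm⟩
end

section
/- Let G be a (P6, diamond)-free graph containing an induced five-cycle Q = {v1,...,v5}, with the associated sets B_{i,i+1}, C_{i,i+2}, Z (indices modulo 5). If B_{i,i+1} is nonempty, then Z is anti-complete to C_{i+1,i+3} ∪ C_{i+3,i}. -/
/-!
Let `b ∈ B_{i,i+1}`, let `c ∈ C_{i+1,i+3}`, and suppose `z ∈ Z` is adjacent to `c`.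
If `b` and `c` were adjacent, then `{b, v_{i+1}, c, v_i}` would induce a diamond, whose missing
edge is `c v_i`. So `b` and `c` are nonadjacent. Then, if `z` and `b` are nonadjacent,
`z, c, v_{i+3}, v_{i+4}, v_i, b` is an induced `P₆`; and if they are adjacent,
`v_i, b, z, c, v_{i+3}, v_{i+2}` is an induced `P₆`. This is `not_adj_of_setC_succ`.

The other case, `c ∈ C_{i+3,i}`, follows by applying this to the reflected cycle
`j ↦ v_{2i+1-j}`, which exchanges `v_i` and `v_{i+1}` and fixes `v_{i+3}`.
-/


open SimpleGraph

/-- Distinctness of the six vertices need not be assumed: distinct vertices of `P₆` have distinct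
neighbourhoods, so the adjacency pattern forces it. -/
lemma not_inducedFree_pathGraph_six {V : Type*} {G : SimpleGraph V} (f : Fin 6 → V)
    (h : ∀ a b : Fin 6, a < b → (G.Adj (f a) (f b) ↔ a.val + 1 = b.val)) :
    ¬ InducedFree (pathGraph 6) G := by
  have key : ∀ a b : Fin 6, G.Adj (f a) (f b) ↔ (pathGraph 6).Adj a b := by
    intro a b
    rw [pathGraph_adj]
    rcases lt_trichotomy a b with hab | rfl | hab
    · rw [h a b hab]; omega
    · simp
    · rw [G.adj_comm, h b a hab]; omega
  have twin : ∀ a b : Fin 6,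
      (∀ c : Fin 6, (a.val + 1 = c.val ∨ c.val + 1 = a.val) ↔
        (b.val + 1 = c.val ∨ c.val + 1 = b.val)) → a = b := by decide
  refine fun hfree => hfree ⟨⟨⟨f, fun a b hab => twin a b fun c => ?_⟩, fun {a b} => key a b⟩⟩
  rw [← pathGraph_adj, ← pathGraph_adj, ← key, ← key, hab]

lemma not_inducedFree_diamondGraph {V : Type*} {G : SimpleGraph V} {p q r s : V} (hrs : r ≠ s)
    (hpq : G.Adj p q) (hpr : G.Adj p r) (hps : G.Adj p s) (hqr : G.Adj q r) (hqs : G.Adj q s)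
    (nrs : ¬ G.Adj r s) : ¬ InducedFree diamondGraph G := by
  refine fun hfree => hfree ⟨⟨⟨![p, q, r, s], ?_⟩, ?_⟩⟩
  · intro a b hab
    fin_cases a <;> fin_cases b <;>
      simp_all [hpq.ne, hpr.ne, hps.ne, hqr.ne, hqs.ne, hpq.ne', hpr.ne', hps.ne', hqr.ne', hqs.ne',
        hrs.symm]
  · intro a b
    change G.Adj (![p, q, r, s] a) (![p, q, r, s] b) ↔ _
    fin_cases a <;> fin_cases b <;>
      simp [diamondGraph, hpq, hpr, hps, hqr, hqs, nrs, hpq.symm, hpr.symm, hps.symm, hqr.symm,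
        hqs.symm, G.adj_comm s r]

lemma not_adj_of_setC_succ {V : Type*} {G : SimpleGraph V} (hG : P6DiamondFree G)
    {v : Fin 5 → V} (hv : IsInducedC5 G v) {i : Fin 5} {b c z : V} (hb : b ∈ setB G v i)
    (hc : c ∈ setC G v (i + 1)) (hz : z ∈ setZ G v) : ¬ G.Adj z c := by
  intro hzc
  obtain ⟨-, hv⟩ := hv
  obtain ⟨-, hb⟩ := hb
  obtain ⟨hcQ, hc⟩ := hc
  obtain ⟨-, hz⟩ := hz
  have b0 : G.Adj b (v i) := (hb _).2 (by clear * -; revert i; decide)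
  have b1 : G.Adj b (v (i + 1)) := (hb _).2 (by clear * -; revert i; decide)
  have b2 : ¬ G.Adj b (v (i + 2)) := fun h => absurd ((hb _).1 h) (by clear * -; revert i; decide)
  have b3 : ¬ G.Adj b (v (i + 3)) := fun h => absurd ((hb _).1 h) (by clear * -; revert i; decide)
  have b4 : ¬ G.Adj b (v (i + 4)) := fun h => absurd ((hb _).1 h) (by clear * -; revert i; decide)
  have c0 : ¬ G.Adj c (v i) := fun h => absurd ((hc _).1 h) (by clear * -; revert i; decide)
  have c1 : G.Adj c (v (i + 1)) := (hc _).2 (by clear * -; revert i; decide)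
  have c2 : ¬ G.Adj c (v (i + 2)) := fun h => absurd ((hc _).1 h) (by clear * -; revert i; decide)
  have c3 : G.Adj c (v (i + 3)) := (hc _).2 (by clear * -; revert i; decide)
  have c4 : ¬ G.Adj c (v (i + 4)) := fun h => absurd ((hc _).1 h) (by clear * -; revert i; decide)
  have v01 : G.Adj (v i) (v (i + 1)) := (hv _ _).2 (by clear * -; revert i; decide)
  have v02 : ¬ G.Adj (v i) (v (i + 2)) :=
    fun h => absurd ((hv _ _).1 h) (by clear * -; revert i; decide)
  have v03 : ¬ G.Adj (v i) (v (i + 3)) :=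
    fun h => absurd ((hv _ _).1 h) (by clear * -; revert i; decide)
  have v04 : G.Adj (v i) (v (i + 4)) := (hv _ _).2 (by clear * -; revert i; decide)
  have v23 : G.Adj (v (i + 2)) (v (i + 3)) := (hv _ _).2 (by clear * -; revert i; decide)
  have v34 : G.Adj (v (i + 3)) (v (i + 4)) := (hv _ _).2 (by clear * -; revert i; decide)
  have nbc : ¬ G.Adj b c := fun hbc =>
    not_inducedFree_diamondGraph (fun h => hcQ ⟨i, h.symm⟩) b1 hbc b0 c1.symm v01.symm c0 hG.2
  by_cases hzb : G.Adj z b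
  · refine not_inducedFree_pathGraph_six ![v i, b, z, c, v (i + 3), v (i + 2)] ?_ hG.1
    intro p q hpq
    fin_cases p <;> fin_cases q <;> simp at hpq ⊢ <;> grind [G.adj_comm]
  · refine not_inducedFree_pathGraph_six ![z, c, v (i + 3), v (i + 4), v i, b] ?_ hG.1
    intro p q hpq
    fin_cases p <;> fin_cases q <;> simp at hpq ⊢ <;> grind [G.adj_comm]

/-- If `B_{i,i+1}` is nonempty, then `Z` is anti-complete to
`C_{i+1,i+3} ∪ C_{i+3,i}`. -/
theorem property26 {V : Type*} [Fintype V] (G : SimpleGraph V)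
    (hG : P6DiamondFree G) (v : Fin 5 → V) (hv : IsInducedC5 G v) (i : Fin 5)
    (hB : (setB G v i).Nonempty) :
    Anticomplete G (setZ G v) (setC G v (i + 1) ∪ setC G v (i + 3)) := by
  obtain ⟨b, hb⟩ := hB
  rintro z hz c (hc | hc)
  · exact not_adj_of_setC_succ hG hv hb hc hz
  · -- The reflection of the cycle that exchanges `v i` and `v (i + 1)`.
    let w : Fin 5 → V := fun j => v (i + i + 1 - j)
    have hw : ∀ x, x ∉ Set.range v → x ∉ Set.range w := by
      rintro x hx ⟨j, rfl⟩
      exact hx ⟨_, rfl⟩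
    refine not_adj_of_setC_succ (v := w) (i := i) (b := b) hG ⟨?_, ?_⟩ ⟨hw b hb.1, ?_⟩
      ⟨hw c hc.1, ?_⟩ ⟨hw z hz.1, fun j => hz.2 _⟩
    · exact fun j k h => sub_right_injective (hv.1 h)
    · intro j k
      rw [hv.2]
      clear * -
      revert i j k
      decide
    · intro j
      rw [hb.2]
      clear * -
      revert i j
      decide
    · intro j
      rw [hc.2]
      clear * -
      revert i j
      decide
end

section
/- Let G be a (P6, diamond)-free graph containing an induced five-cycle Q = {v1,...,v5}, with the associated sets A_i, C_{i,i+2} (indices modulo 5). If G additionally contains no induced subgraph isomorphic to S_1, then C_{i,i+2} is anti-complete to A_i ∪ A_{i+2} for each i. -/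
/-! Let `c ∈ C_{i,i+2}`. As `c` sees exactly the two neighbours of `v_{i+1}` on the cycle, substituting
`c` for `v_{i+1}` gives another induced five-cycle `Q'` (`isInducedC5_update`). A vertex
`a ∈ A_i` adjacent to `c` has neighbourhood `{v_i, c}` in `Q'`, and a vertex `a ∈ A_{i+2}` adjacent
to `c` has neighbourhood `{c, v_{i+2}}`. Both are pairs of consecutive vertices of `Q'`, so
`Q' ∪ {a}` induces `S₁` (`notMem_setB`).
-/

open SimpleGraph

/-- The graph `Sₙ`: a five-cycle `v₁v₂v₃v₄v₅` (vertices `Sum.inl 0, …, Sum.inl 4`)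
together with a clique `B` of `n` new vertices which is complete to `{v₂, v₃}`
(i.e. `Sum.inl 1, Sum.inl 2`) and anti-complete to `{v₁, v₄, v₅}`. -/
def Sgraph (n : ℕ) : SimpleGraph (Fin 5 ⊕ Fin n) :=
  SimpleGraph.fromRel (fun a b =>
    match a, b with
    | Sum.inl i, Sum.inl j => j = i + 1
    | Sum.inl i, Sum.inr _ => i = 1 ∨ i = 2
    | Sum.inr _, Sum.inl _ => False
    | Sum.inr x, Sum.inr y => x ≠ y)

/-- In an `S₁`-free graph, no vertex outside an induced five-cycle sees exactly two consecutive
vertices of that cycle. -/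
lemma notMem_setB {V : Type*} {G : SimpleGraph V} (hS1 : InducedFree (Sgraph 1) G)
    {v : Fin 5 → V} (hv : IsInducedC5 G v) (i : Fin 5) (b : V) : b ∉ setB G v i := by
  rintro ⟨hb, hadj⟩
  apply hS1
  -- In `S₁` the extra vertex sees the cycle vertices `1` and `2`, hence the rotation by `i - 1`.
  refine ⟨⟨⟨Sum.elim (fun k => v (k + (i - 1))) (fun _ => b), ?_⟩, ?_⟩⟩
  · rintro (x | x) (y | y) h
    · have := hv.1 h
      simpa using this
    · exact absurd ⟨_, h⟩ hb
    · exact absurd ⟨_, h.symm⟩ hb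
    · rw [Subsingleton.elim x y]
  · rintro (x | x) (y | y)
    · change G.Adj (v _) (v _) ↔ _
      simp only [hv.2, Sgraph, fromRel_adj, ne_eq, Sum.inl.injEq]
      clear hadj
      revert x y i
      decide
    · change G.Adj (v _) b ↔ _
      simp only [G.adj_comm _ b, hadj, Sgraph, fromRel_adj, ne_eq, reduceCtorEq,
        not_false_eq_true, true_and, or_false]
      clear hadj
      revert x i
      decide
    · change G.Adj b (v _) ↔ _
      simp only [hadj, Sgraph, fromRel_adj, ne_eq, reduceCtorEq,
        not_false_eq_true, true_and, false_or]
      clear hadj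
      revert y i
      decide
    · simp [Subsingleton.elim x y]

/-- A vertex of `C_{i,i+2}` can take the place of `v_{i+1}` in the induced five-cycle. -/
lemma isInducedC5_update {V : Type*} {G : SimpleGraph V} {v : Fin 5 → V}
    (hv : IsInducedC5 G v) {i : Fin 5} {c : V} (hc : c ∈ setC G v i) :
    IsInducedC5 G (Function.update v (i + 1) c) := by
  obtain ⟨hcv, hadj⟩ := hc
  refine ⟨fun x y h => ?_, fun x y => ?_⟩
  · by_cases hx : x = i + 1 <;> by_cases hy : y = i + 1
    · rw [hx, hy]
    · simp only [hx, Function.update_self, Function.update_of_ne hy] at h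
      exact absurd ⟨_, h.symm⟩ hcv
    · simp only [hy, Function.update_self, Function.update_of_ne hx] at h
      exact absurd ⟨_, h⟩ hcv
    · simp only [Function.update_of_ne hx, Function.update_of_ne hy] at h
      exact hv.1 h
  · by_cases hx : x = i + 1 <;> by_cases hy : y = i + 1
    · simp [hx, hy]
    · simp only [hx, Function.update_self, Function.update_of_ne hy, hadj]
      clear hadj hx
      revert i y
      decide
    · simp only [hy, Function.update_self, Function.update_of_ne hx, G.adj_comm _ c, hadj]
      clear hadj hy
      revert i x
      decide
    · simp only [Function.update_of_ne hx, Function.update_of_ne hy, hv.2]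

/-- If `a ∈ A_j` is adjacent to `c`, then its neighbourhood in the cycle obtained by substituting
`c` for `v_k` consists of the vertices at positions `j` and `k`. -/
lemma adj_update_iff {V : Type*} {G : SimpleGraph V} {v : Fin 5 → V} {j k : Fin 5} {a c : V}
    (ha : a ∈ setA G v j) (hac : G.Adj a c) (l : Fin 5) :
    G.Adj a (Function.update v k c l) ↔ l = j ∨ l = k := by
  by_cases hl : l = k
  · simp [hl, hac]
  · simp [ha.2, hl]

lemma notMem_range_update {V : Type*} {v : Fin 5 → V} {k : Fin 5} {a c : V}
    (ha : a ∉ Set.range v) (hac : a ≠ c) : a ∉ Set.range (Function.update v k c) := by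
  rintro ⟨l, hl⟩
  by_cases hlk : l = k
  · simp only [hlk, Function.update_self] at hl
    exact hac hl.symm
  · rw [Function.update_of_ne hlk] at hl
    exact ha ⟨l, hl⟩

/-- If `G` additionally contains no induced `S₁`, then `C_{i,i+2}` is
anti-complete to `A_i ∪ A_{i+2}` for each `i`. -/
theorem S1free_C_anticomplete_A {V : Type*} [Fintype V] (G : SimpleGraph V)
    (hG : P6DiamondFree G) (hS1 : InducedFree (Sgraph 1) G)
    (v : Fin 5 → V) (hv : IsInducedC5 G v) :
    ∀ i : Fin 5, Anticomplete G (setC G v i) (setA G v i ∪ setA G v (i + 2)) := by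
  rintro i c hc a (ha | ha) hca
  · refine notMem_setB hS1 (isInducedC5_update hv hc) i a
      ⟨notMem_range_update ha.1 hca.ne', fun l => ?_⟩
    exact adj_update_iff ha hca.symm l
  · refine notMem_setB hS1 (isInducedC5_update hv hc) (i + 1) a
      ⟨notMem_range_update ha.1 hca.ne', fun l => ?_⟩
    rw [adj_update_iff ha hca.symm l, add_assoc, or_comm]
    rfl
end

section
/- Let G be a (P6, diamond)-free graph containing an induced five-cycle Q = {v1,...,v5}, with the associated sets A_i, C_{i,i+2} (indices modulo 5). Suppose G additionally contains no induced subgraph isomorphic to S_1, and A_{i+1}, A_{i+3} and A_{i+4} are all nonempty. Then each vertex in C_{i,i+2} is complete to one of the two sets A_{i+1} and A_{i+3} ∪ A_{i+4}, and anti-complete to the other. -/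
/-!
Index the five-cycle so that the vertex `x` under consideration has neighbours `v 0` and `v 2` on
it. The claim comes down to one fact: if `a ∈ A_1` and `b ∈ A_3 ∪ A_4`, then `x` is adjacent to
exactly one of `a` and `b`. Since both sets are nonempty, the adjacency of `x` to one vertex of
either set then decides all the others.

The reflection `j ↦ 2 - j` of the cycle fixes `A_1`, swaps `A_3` with `A_4` and keeps the
neighbours of `x`, so only `b ∈ A_3` needs attention. There `a` is adjacent to `b`, since otherwise
`a, v 1, v 0, v 4, v 3, b` is an induced `P₆`. If `x` is adjacent to neither of `a`, `b`, then
`x, v 0, v 1, a, b, v 3` is an induced `P₆`. If `x` is adjacent to both, then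
`v 0, x, b, v 3, v 4` is an induced five-cycle and `a` sees exactly its edge `x b`, an induced
`S_1`.
-/

open SimpleGraph

/-- In a graph without two vertices having the same neighbourhood, a map that preserves and
reflects adjacency is automatically injective, hence exhibits an induced copy of that graph. -/
lemma InducedFree.false_of_adj_iff {W V : Type*} {H : SimpleGraph W} {G : SimpleGraph V}
    (hfree : InducedFree H G) (hH : ∀ a b, (∀ c, H.Adj a c ↔ H.Adj b c) → a = b)
    (f : W → V) (hf : ∀ a b, G.Adj (f a) (f b) ↔ H.Adj a b) : False :=
  hfree ⟨⟨⟨f, fun a b hab => hH a b fun c => by rw [← hf, ← hf, hab]⟩, hf _ _⟩⟩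

lemma pathGraph_six_adj (a b : Fin 6) :
    (pathGraph 6).Adj a b ↔ (a.val + 1 = b.val ∨ b.val + 1 = a.val) :=
  pathGraph_adj

lemma false_of_induced_P6 {V : Type*} {G : SimpleGraph V} (hP : InducedFree (pathGraph 6) G)
    (f : Fin 6 → V)
    (hf : ∀ a b, G.Adj (f a) (f b) ↔ (a.val + 1 = b.val ∨ b.val + 1 = a.val)) : False := by
  refine hP.false_of_adj_iff ?_ f fun a b => (hf a b).trans (pathGraph_six_adj a b).symm
  simp only [pathGraph_six_adj]
  decide

/-- The five-cycle of `S_1` is `f`, and `y` is the vertex attached to its edge `f 1`, `f 2`. -/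
lemma false_of_induced_S1 {V : Type*} {G : SimpleGraph V} (hS : InducedFree (Sgraph 1) G)
    (f : Fin 5 → V) (y : V) (hf : ∀ a b, G.Adj (f a) (f b) ↔ (b = a + 1 ∨ a = b + 1))
    (hy : ∀ a, G.Adj y (f a) ↔ (a = 1 ∨ a = 2)) : False := by
  have hcc : ∀ a b : Fin 5, (Sgraph 1).Adj (.inl a) (.inl b) ↔ (b = a + 1 ∨ a = b + 1) := by
    simp only [Sgraph, fromRel_adj, ne_eq, Sum.inl.injEq]
    decide
  have hcy : ∀ (a : Fin 5) (t : Fin 1), (Sgraph 1).Adj (.inl a) (.inr t) ↔ (a = 1 ∨ a = 2) := by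
    simp [Sgraph]
  have hyc (a : Fin 5) (t : Fin 1) : (Sgraph 1).Adj (.inr t) (.inl a) ↔ (a = 1 ∨ a = 2) := by
    rw [SimpleGraph.adj_comm, hcy]
  have hyy (s t : Fin 1) : ¬ (Sgraph 1).Adj (.inr s) (.inr t) := by
    rw [Subsingleton.elim s t]
    exact SimpleGraph.irrefl _
  refine hS.false_of_adj_iff ?_ (Sum.elim f fun _ => y) ?_
  · simp only [Sum.forall, hcc, hcy, hyc, hyy, Sum.inl.injEq, Sum.inr.injEq, reduceCtorEq]
    decide
  · rintro (a | s) (b | t)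
    · simp [hf, hcc]
    · simp [G.adj_comm, hy, hcy]
    · simp [hy, hyc]
    · simp [hyy]

lemma adj_iff_not_adj {V : Type*} {G : SimpleGraph V} (hP : InducedFree (pathGraph 6) G)
    (hS : InducedFree (Sgraph 1) G) (v : Fin 5 → V)
    (hv : ∀ i j, G.Adj (v i) (v j) ↔ (j = i + 1 ∨ i = j + 1)) {x a b : V}
    (hx : ∀ j, G.Adj x (v j) ↔ (j = 0 ∨ j = 2)) (ha : ∀ j, G.Adj a (v j) ↔ j = 1)
    (hb : ∀ j, G.Adj b (v j) ↔ j = 3) : G.Adj x a ↔ ¬ G.Adj x b := by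
  have hx' (j) : G.Adj (v j) x ↔ (j = 0 ∨ j = 2) := by rw [G.adj_comm, hx]
  have ha' (j) : G.Adj (v j) a ↔ j = 1 := by rw [G.adj_comm, ha]
  have hb' (j) : G.Adj (v j) b ↔ j = 3 := by rw [G.adj_comm, hb]
  have hab : G.Adj a b := by
    by_contra h
    have h' : ¬ G.Adj b a := fun h' => h h'.symm
    refine false_of_induced_P6 hP ![a, v 1, v 0, v 4, v 3, b] fun s t => ?_
    fin_cases s <;> fin_cases t <;> simp [hv, ha, hb, ha', hb', h, h']
  refine ⟨fun hxa hxb => ?_, fun hxb => by_contra fun hxa => ?_⟩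
  · refine false_of_induced_S1 hS ![v 0, x, b, v 3, v 4] a (fun s t => ?_) fun s => ?_
    · fin_cases s <;> fin_cases t <;> simp [hv, hx, hb, hx', hb', hxb, hxb.symm]
    · fin_cases s <;> simp [ha, hab, hxa.symm]
  · have hax : ¬ G.Adj a x := fun h => hxa h.symm
    have hbx : ¬ G.Adj b x := fun h => hxb h.symm
    refine false_of_induced_P6 hP ![x, v 0, v 1, a, b, v 3] fun s t => ?_
    fin_cases s <;> fin_cases t <;>
      simp [hv, hx, ha, hb, hx', ha', hb', hab, hab.symm, hxa, hxb, hax, hbx]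

/-- If `G` additionally contains no induced `S₁` and `A_{i+1}`, `A_{i+3}` and
`A_{i+4}` are all nonempty, then each vertex in `C_{i,i+2}` is complete to one of
the sets `A_{i+1}` and `A_{i+3} ∪ A_{i+4}` and anti-complete to the other. -/
theorem S1free_C_complete_or_anticomplete {V : Type*} [Fintype V]
    (G : SimpleGraph V) (hG : P6DiamondFree G) (hS1 : InducedFree (Sgraph 1) G)
    (v : Fin 5 → V) (hv : IsInducedC5 G v) (i : Fin 5)
    (hA1 : (setA G v (i + 1)).Nonempty) (hA3 : (setA G v (i + 3)).Nonempty)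
    (hA4 : (setA G v (i + 4)).Nonempty) :
    ∀ x ∈ setC G v i,
      (CompleteTo G {x} (setA G v (i + 1)) ∧
        Anticomplete G {x} (setA G v (i + 3) ∪ setA G v (i + 4))) ∨
      (Anticomplete G {x} (setA G v (i + 1)) ∧
        CompleteTo G {x} (setA G v (i + 3) ∪ setA G v (i + 4))) := by
  intro x hx
  have key (a) (ha : a ∈ setA G v (i + 1)) (b) (hb : b ∈ setA G v (i + 3) ∪ setA G v (i + 4)) :
      G.Adj x a ↔ ¬ G.Adj x b := by
    rcases hb with hb | hb
    · refine adj_iff_not_adj hG.1 hS1 (fun j => v (i + j)) (fun s t => ?_) (fun j => ?_)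
        (fun j => ?_) fun j => ?_
      · rw [hv.2]; clear * - i s t; decide +revert
      · rw [hx.2]; clear * - i j; decide +revert
      · rw [ha.2]; clear * - i j; decide +revert
      · rw [hb.2]; clear * - i j; decide +revert
    · refine adj_iff_not_adj hG.1 hS1 (fun j => v (i + 2 - j)) (fun s t => ?_) (fun j => ?_)
        (fun j => ?_) fun j => ?_
      · rw [hv.2]; clear * - i s t; decide +revert
      · rw [hx.2]; clear * - i j; decide +revert
      · rw [ha.2]; clear * - i j; decide +revert
      · rw [hb.2]; clear * - i j; decide +revert
  obtain ⟨a, ha⟩ := hA1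
  obtain ⟨b, hb⟩ := hA3
  have hb' : b ∈ setA G v (i + 3) ∪ setA G v (i + 4) := Or.inl hb
  simp only [CompleteTo, Anticomplete, Set.mem_singleton_iff, forall_eq]
  by_cases hxa : G.Adj x a
  · have hxb := (key a ha b hb').1 hxa
    exact Or.inl ⟨fun a' ha' => (key a' ha' b hb').2 hxb, fun b' hb' => (key a ha b' hb').1 hxa⟩
  · have hxb : G.Adj x b := by_contra fun h => hxa ((key a ha b hb').2 h)
    exact Or.inr ⟨fun a' ha' h => (key a' ha' b hb').1 h hxb,
      fun b' hb' => by_contra fun h => hxa ((key a ha b' hb').2 h)⟩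
end

section
/- Let G be a 6-vertex-critical (P6, diamond)-free graph with clique number 3, let A = {a1, a2, a3} be a triangle in G, and for i = 1, 2, 3 let B_i be the set of vertices outside A adjacent to a_i. Then for each i ∈ {1, 2, 3}, the subgraph of G induced by (B_1 ∪ B_2 ∪ B_3) \ B_i is triangle-free and not 3-colourable. -/
open SimpleGraph

/-- `B_i`: the set of vertices outside the clique `A = {a 0, …}` adjacent to `a i`. -/
def Bset {V : Type*} {k : ℕ} (G : SimpleGraph V) (a : Fin k → V) (i : Fin k) : Set V :=
  {x | x ∉ Set.range a ∧ G.Adj x (a i)}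

/-!
Fix the triangle `abc`, where `c = a i`, and suppose that the vertices outside it adjacent to `a`
or `b` (the set `Near`) have a proper 3-colouring. The contradiction is a proper 5-colouring of `G`.

Since `G` has no diamond and no `K₄`, every edge lies in at most one triangle. So `Near` misses the
neighbourhood of `c`, no vertex of `Near` sees both `a` and `b`, and the neighbourhood of any vertex
induces a matching. Let `Far` be the set of common non-neighbours of `a` and `b`. If `x ∈ Near` is
attached to a component `L` of `Far`, then `x` followed by `a, b` or by `b, a` is an induced path
leading away from `L`, a `Tail`. As there is no `P₆`, every vertex of `L` is then within distance
two of `x` through `L`, and the non-neighbours of `x` in `L` also induce a matching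
(`Tail.matching`); in particular `L` is 4-colourable (`Tail.four_col`).

* `Far` contains no induced five-cycle (`Setup.no_c5`). Otherwise the set `X` of attachments in
  `Near` of its component is independent, since each attachment sees three or more vertices of the
  cycle in a prescribed pattern. Each component of `G` minus `X` and `c` is attached to some
  `x ∈ X` having a tail, in `ab` or along the cycle, so it is 4-colourable, and a fifth colour is
  available for `X` and `c`.
* A triangle in `Far` is a whole component, as criticality provides each of its vertices with
  neighbours in `Near` (`Setup.tri`). A neighbour of `a` attached at a vertex of the triangle is
  complete to the neighbours of `b` not attached there (`Setup.tri_complete`), and this makes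
  `N(a)` or `N(b)` independent (`Setup.indep_or`).

A `P₆`-free graph without triangles and induced five-cycles is bipartite (`bipartite_of`), so two
new colours serve for `a`, `b` and `Far` minus one vertex from each far triangle. Those remaining
vertices reuse the colour `0` of the 3-colouring, once that colouring is chosen so as to leave `0`
free on their neighbours (`Setup.extend`, `Setup.final`).
-/

/-! ### Critical graphs and forbidden subgraphs -/

namespace SixCritical

variable {V : Type*} {G : SimpleGraph V}

/-- `f` restricts to a proper colouring of the subgraph induced by `W`; working with total
functions on `V` makes it easy to glue colourings of different subsets. -/
def ProperOn (G : SimpleGraph V) (W : Set V) {α : Type*} (f : V → α) : Prop :=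
  ∀ u ∈ W, ∀ v ∈ W, G.Adj u v → f u ≠ f v

/-- Every edge lies in at most one triangle, i.e. `G` is (diamond, `K₄`)-free. -/
def EdgeTri (G : SimpleGraph V) : Prop :=
  ∀ ⦃u v w w' : V⦄, G.Adj u v → G.Adj u w → G.Adj v w → G.Adj u w' → G.Adj v w' → w = w'

/-- `G` has no induced six-vertex path, spelled out on vertices. -/
def NoP6 (G : SimpleGraph V) : Prop :=
  ∀ v0 v1 v2 v3 v4 v5 : V, G.Adj v0 v1 → G.Adj v1 v2 → G.Adj v2 v3 → G.Adj v3 v4 →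
    G.Adj v4 v5 → ¬ G.Adj v0 v2 → ¬ G.Adj v0 v3 → ¬ G.Adj v0 v4 → ¬ G.Adj v0 v5 →
    ¬ G.Adj v1 v3 → ¬ G.Adj v1 v4 → ¬ G.Adj v1 v5 → ¬ G.Adj v2 v4 → ¬ G.Adj v2 v5 →
    ¬ G.Adj v3 v5 → False

/-- What is used of 6-vertex-criticality: `G` is not 5-colourable, but every proper induced
subgraph is. -/
structure Crit (G : SimpleGraph V) : Prop where
  proper : ∀ W : Set V, W ≠ Set.univ → ∃ f : V → Fin 5, ProperOn G W f
  not_col : ¬ ∃ f : V → Fin 5, ProperOn G Set.univ f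

lemma edgeTri_of (hd : InducedFree diamondGraph G) (hk : G.CliqueFree 4) : EdgeTri G := by
  intro u v w w' huv huw hvw huw' hvw'
  by_contra hne
  by_cases hww : G.Adj w w'
  · classical
    refine hk {u, v, w, w'} ⟨?_, ?_⟩
    · simp [isClique_insert, huv, huw, hvw, huw', hvw', hww]
    · simp [huv.ne, huw.ne, hvw.ne, huw'.ne, hvw'.ne, hne]
  · have hww2 : ¬ G.Adj w' w := fun h => hww h.symm
    have key : ∀ i j : Fin 4, G.Adj (![u, v, w, w'] i) (![u, v, w, w'] j) ↔
        diamondGraph.Adj i j := by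
      intro i j
      fin_cases i <;> fin_cases j <;>
        simp [diamondGraph, huv, huw, hvw, huw', hvw', hww, huv.symm, huw.symm, hvw.symm,
          huw'.symm, hvw'.symm, hww2]
    refine hd ⟨⟨⟨![u, v, w, w'], ?_⟩, @fun i j => key i j⟩⟩
    intro i j
    fin_cases i <;> fin_cases j <;>
      simp [huv.ne, huw.ne, hvw.ne, huw'.ne, hvw'.ne, hne, huv.ne', huw.ne', hvw.ne',
        huw'.ne', hvw'.ne', Ne.symm hne]

lemma noP6_of (hp : InducedFree (SimpleGraph.pathGraph 6) G) : NoP6 G := by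
  intro v0 v1 v2 v3 v4 v5 h01 h12 h23 h34 h45 h02 h03 h04 h05 h13 h14 h15 h24 h25 h35
  have key : ∀ i j : Fin 6, G.Adj (![v0, v1, v2, v3, v4, v5] i) (![v0, v1, v2, v3, v4, v5] j) ↔
      (SimpleGraph.pathGraph 6).Adj i j := by
    intro i j
    fin_cases i <;> fin_cases j <;>
      simp [SimpleGraph.pathGraph_adj, h01, h12, h23, h34, h45, h01.symm, h12.symm, h23.symm,
        h34.symm, h45.symm, h02, h03, h04, h05, h13, h14, h15, h24, h25, h35,
        mt G.adj_symm h02, mt G.adj_symm h03, mt G.adj_symm h04, mt G.adj_symm h05,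
        mt G.adj_symm h13, mt G.adj_symm h14, mt G.adj_symm h15, mt G.adj_symm h24,
        mt G.adj_symm h25, mt G.adj_symm h35]
  -- Distinct vertices of `P₆` have distinct neighbourhoods, so `key` forces injectivity.
  have sep : ∀ i j : Fin 6, (∀ k : Fin 6, (i.1 + 1 = k.1 ∨ k.1 + 1 = i.1) ↔
      (j.1 + 1 = k.1 ∨ k.1 + 1 = j.1)) → i = j := by decide
  refine hp ⟨⟨⟨![v0, v1, v2, v3, v4, v5], ?_⟩, @fun i j => key i j⟩⟩
  intro i j hij
  refine sep i j fun k => ?_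
  rw [← SimpleGraph.pathGraph_adj, ← SimpleGraph.pathGraph_adj, ← key, ← key, hij]

lemma properOn_of_colorable {n : ℕ} {W : Set V} (h : (G.induce W).Colorable (n + 1)) :
    ∃ f : V → Fin (n + 1), ProperOn G W f := by
  classical
  obtain ⟨c⟩ := h
  refine ⟨fun v => if hv : v ∈ W then c ⟨v, hv⟩ else 0, fun u hu v hv huv => ?_⟩
  simp only [hu, hv, dif_pos]
  exact c.valid (by simpa using huv)

lemma crit_of (h : IsVertexCritical 6 G) : Crit G := by
  refine ⟨fun W hW => ?_, ?_⟩
  · have h1 := h.2 W hW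
    have h2 : (G.induce W).chromaticNumber ≤ (5 : ℕ) := by
      have : ((6 : ℕ) : ℕ∞) = (5 : ℕ) + 1 := by norm_num
      rw [this] at h1
      exact Order.le_of_lt_add_one h1
    exact properOn_of_colorable (chromaticNumber_le_iff_colorable.1 h2)
  · rintro ⟨f, hf⟩
    have h1 : G.Colorable 5 := ⟨Coloring.mk f fun {u v} huv => hf u trivial v trivial huv⟩
    have h2 := chromaticNumber_le_iff_colorable.2 h1
    rw [h.1] at h2
    exact absurd h2 (by norm_num)

lemma Crit.false_of_coloring (hc : Crit G) {α : Type*} [Fintype α] (hα : Fintype.card α = 5)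
    (f : V → α) (hf : ∀ u v, G.Adj u v → f u ≠ f v) : False := by
  refine hc.not_col ⟨fun v => Fintype.equivFinOfCardEq hα (f v), fun u _ v _ huv h => ?_⟩
  exact hf u v huv ((Fintype.equivFinOfCardEq hα).injective h)

/-- Vertices of a critical graph have large degree; more than three neighbours suffice here. -/
lemma Crit.exists_nbr (hc : Crit G) (v p q r : V) :
    ∃ w, G.Adj v w ∧ w ≠ p ∧ w ≠ q ∧ w ≠ r := by
  classical
  by_contra! hno
  obtain ⟨f, hf⟩ := hc.proper {v}ᶜ (by
    intro h
    have : v ∈ ({v}ᶜ : Set V) := h ▸ trivial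
    simp at this)
  obtain ⟨k, hk⟩ : ∃ k : Fin 5, k ≠ f p ∧ k ≠ f q ∧ k ≠ f r := by
    generalize f p = x
    generalize f q = y
    generalize f r = z
    revert x y z
    decide
  have hN : ∀ w, G.Adj v w → f w ≠ k := by
    intro w hw h
    by_cases h1 : w = p
    · exact hk.1 (by rw [← h, h1])
    by_cases h2 : w = q
    · exact hk.2.1 (by rw [← h, h2])
    exact hk.2.2 (by rw [← h, hno w hw h1 h2])
  refine hc.false_of_coloring (Fintype.card_fin 5) (Function.update f v k) fun u w huw => ?_
  by_cases hu : u = v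
  · subst hu
    rw [Function.update_self, Function.update_of_ne huw.ne']
    exact (hN w huw).symm
  · by_cases hw : w = v
    · subst hw
      rw [Function.update_self, Function.update_of_ne huw.ne]
      exact hN u huw.symm
    · rw [Function.update_of_ne hu, Function.update_of_ne hw]
      exact hf u hu w hw huw

/-- A critical graph has no cut vertex: a set of vertices `P` whose only outside neighbour is `c`
can be recoloured by a permutation so as to agree with a colouring of the rest at `c`. -/
lemma Crit.no_cut (hc : Crit G) {P : Set V} {c u w : V} (hu : u ∈ P) (hcP : c ∉ P)
    (hwP : w ∉ P) (hwc : w ≠ c) : ∃ x ∈ P, ∃ y, y ∉ P ∧ y ≠ c ∧ G.Adj x y := by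
  classical
  by_contra! hno
  obtain ⟨f, hf⟩ := hc.proper (insert c P) (by
    intro h
    have : w ∈ insert c P := h ▸ trivial
    rcases this with h | h
    exacts [hwc h, hwP h])
  obtain ⟨g, hg⟩ := hc.proper Pᶜ (by
    intro h
    have : u ∈ Pᶜ := h ▸ trivial
    exact this hu)
  have mixed : ∀ x ∈ P, ∀ y, y ∉ P → G.Adj x y → Equiv.swap (f c) (g c) (f x) ≠ g y := by
    intro x hx y hy hxy
    have hyc : y = c := by
      by_contra h
      exact hno x hx y hy h hxy
    subst hyc
    intro h
    have h2 : Equiv.swap (f y) (g y) (f x) = Equiv.swap (f y) (g y) (f y) := by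
      rw [h, Equiv.swap_apply_left]
    exact hf x (Or.inr hx) y (Or.inl rfl) hxy ((Equiv.injective _) h2)
  refine hc.false_of_coloring (Fintype.card_fin 5)
    (fun v => if v ∈ P then Equiv.swap (f c) (g c) (f v) else g v) fun x y hxy => ?_
  by_cases hx : x ∈ P <;> by_cases hy : y ∈ P <;> simp only [hx, hy, if_true, if_false]
  · exact fun h => hf x (Or.inr hx) y (Or.inr hy) hxy ((Equiv.injective _) h)
  · exact mixed x hx y hy hxy
  · exact (mixed y hy x hx hxy.symm).symm
  · exact hg x hx y hy hxy

/-! ### Connected pieces -/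

/-- `C` induces a connected subgraph: a property that holds somewhere on `C` and spreads along
the edges inside `C` holds on all of `C`. -/
def Conn (G : SimpleGraph V) (C : Set V) : Prop :=
  ∀ P : V → Prop, (∃ u ∈ C, P u) → (∀ u ∈ C, ∀ v ∈ C, G.Adj u v → P u → P v) → ∀ v ∈ C, P v

/-- `C` is a connected component of the subgraph induced by `W`. -/
structure IsComp (G : SimpleGraph V) (W C : Set V) : Prop where
  sub : C ⊆ W
  ne : C.Nonempty
  conn : Conn G C
  closed : ∀ u ∈ C, ∀ v ∈ W, G.Adj u v → v ∈ C

lemma isComp_component (W : Set V) (c : (G.induce W).ConnectedComponent) :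
    IsComp G W {v | ∃ h : v ∈ W, (G.induce W).connectedComponentMk ⟨v, h⟩ = c} := by
  refine ⟨fun v hv => hv.1, ?_, ?_, ?_⟩
  · obtain ⟨⟨v, hv⟩, rfl⟩ := c.exists_rep
    exact ⟨v, hv, rfl⟩
  · rintro P ⟨u, ⟨hu, rfl⟩, hPu⟩ hstep v ⟨hv, hvc⟩
    obtain ⟨p⟩ := ConnectedComponent.exact hvc.symm
    have : ∀ (x y : W), (G.induce W).Walk x y →
        (G.induce W).connectedComponentMk x = (G.induce W).connectedComponentMk ⟨u, hu⟩ →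
        P x → P y := by
      intro x y p
      induction p with
      | nil => exact fun _ h => h
      | @cons x y z hxy p ih =>
        intro hx hPx
        have hy : (G.induce W).connectedComponentMk y =
            (G.induce W).connectedComponentMk ⟨u, hu⟩ := by
          rw [← hx]
          exact ConnectedComponent.sound hxy.symm.reachable
        exact ih hy (hstep x ⟨x.2, hx⟩ y ⟨y.2, hy⟩ (by simpa using hxy) hPx)
    exact this _ _ p rfl hPu
  · rintro u ⟨hu, rfl⟩ v hv huv
    refine ⟨hv, ConnectedComponent.sound ?_⟩
    have : (G.induce W).Adj ⟨v, hv⟩ ⟨u, hu⟩ := by simpa using huv.symm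
    exact this.reachable

lemma exists_isComp {W : Set V} {r : V} (hr : r ∈ W) : ∃ C, IsComp G W C ∧ r ∈ C :=
  ⟨_, isComp_component W ((G.induce W).connectedComponentMk ⟨r, hr⟩), hr, rfl⟩

lemma properOn_of_comps {α : Type*} [Inhabited α] (W : Set V)
    (h : ∀ C, IsComp G W C → ∃ f : V → α, ProperOn G C f) : ∃ f : V → α, ProperOn G W f := by
  classical
  choose F hF using fun c => h _ (isComp_component W c)
  refine ⟨fun v => if hv : v ∈ W then F ((G.induce W).connectedComponentMk ⟨v, hv⟩) v
    else default, fun u hu v hv huv => ?_⟩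
  simp only [hu, hv, dif_pos]
  have he : (G.induce W).connectedComponentMk ⟨v, hv⟩ =
      (G.induce W).connectedComponentMk ⟨u, hu⟩ := by
    have : (G.induce W).Adj ⟨v, hv⟩ ⟨u, hu⟩ := by simpa using huv.symm
    exact ConnectedComponent.sound this.reachable
  rw [he]
  exact hF _ u ⟨hu, rfl⟩ v ⟨hv, he⟩ huv

lemma matching_two_col [Finite V] (M : Set V)
    (h : ∀ v ∈ M, ∀ w ∈ M, ∀ w' ∈ M, G.Adj v w → G.Adj v w' → w = w') :
    ∃ f : V → Bool, ProperOn G M f := by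
  classical
  obtain ⟨n, ⟨e⟩⟩ := Finite.exists_equiv_fin V
  refine ⟨fun v => decide (∃ u ∈ M, G.Adj v u ∧ e u < e v), fun u hu v hv huv => ?_⟩
  have h1 : (∃ w ∈ M, G.Adj u w ∧ e w < e u) ↔ e v < e u :=
    ⟨fun ⟨w, hw, huw, hlt⟩ => h u hu v hv w hw huv huw ▸ hlt, fun hlt => ⟨v, hv, huv, hlt⟩⟩
  have h2 : (∃ w ∈ M, G.Adj v w ∧ e w < e v) ↔ e u < e v :=
    ⟨fun ⟨w, hw, hvw, hlt⟩ => h v hv u hu w hw huv.symm hvw ▸ hlt,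
      fun hlt => ⟨u, hu, huv.symm, hlt⟩⟩
  have hne : e u ≠ e v := fun h => huv.ne (e.injective h)
  simp only [h1, h2]
  rcases lt_or_gt_of_ne hne with hlt | hlt
  · simp [hlt, hlt.le]
  · simp [hlt, hlt.le]

/-- The vertices of `C` have no neighbour among `p`, `q`, while `x`, `p`, `q` is an induced path.
Such a path is a tail that turns a path on three vertices leaving `x` into `C` into a `P₆`. -/
structure Tail (G : SimpleGraph V) (C : Set V) (x p q : V) : Prop where
  xp : G.Adj x p
  pq : G.Adj p q
  xq : ¬ G.Adj x q
  far : ∀ v ∈ C, ¬ G.Adj v p ∧ ¬ G.Adj v q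

lemma Tail.ext (hP : NoP6 G) {C : Set V} {x p q y d d' : V} (ht : Tail G C x p q)
    (hy : y ∈ C) (hd : d ∈ C) (hd' : d' ∈ C) (hxy : G.Adj x y) (hxd : ¬ G.Adj x d)
    (hxd' : ¬ G.Adj x d') (hyd : G.Adj y d) (hdd : G.Adj d d') : G.Adj y d' := by
  by_contra hn
  exact hP d' d y x p q hdd.symm hyd.symm hxy.symm ht.xp ht.pq (fun h => hn h.symm)
    (fun h => hxd' h.symm) (ht.far d' hd').1 (ht.far d' hd').2 (fun h => hxd h.symm)
    (ht.far d hd).1 (ht.far d hd).2 (ht.far y hy).1 (ht.far y hy).2 ht.xq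

/-- With a tail at `x`, every vertex of a connected `C` meeting `N(x)` is within distance two
of `x` through `C`. -/
lemma Tail.dominated (hP : NoP6 G) {C : Set V} {x p q : V} (ht : Tail G C x p q)
    (hC : Conn G C) (hx : ∃ u ∈ C, G.Adj x u) :
    ∀ d ∈ C, G.Adj x d ∨ ∃ y ∈ C, G.Adj x y ∧ G.Adj y d := by
  refine hC _ ?_ ?_
  · obtain ⟨u, hu, hxu⟩ := hx
    exact ⟨u, hu, Or.inl hxu⟩
  · rintro u hu v hv huv (h | ⟨y, hy, hxy, hyu⟩)
    · exact Or.inr ⟨u, hu, h, huv⟩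
    · by_cases hxu : G.Adj x u
      · exact Or.inr ⟨u, hu, hxu, huv⟩
      by_cases hxv : G.Adj x v
      · exact Or.inl hxv
      · exact Or.inr ⟨y, hy, hxy, ht.ext hP hy hu hv hxy hxu hxv hyu huv⟩

/-- The non-neighbours of `x` in `C` induce a graph of maximum degree at most one. -/
lemma Tail.matching (hE : EdgeTri G) (hP : NoP6 G) {C : Set V} {x p q : V} (ht : Tail G C x p q)
    (hC : Conn G C) (hx : ∃ u ∈ C, G.Adj x u) {d d1 d2 : V} (hd : d ∈ C) (hd1 : d1 ∈ C)
    (hd2 : d2 ∈ C) (hxd : ¬ G.Adj x d) (hxd1 : ¬ G.Adj x d1) (hxd2 : ¬ G.Adj x d2)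
    (h1 : G.Adj d d1) (h2 : G.Adj d d2) : d1 = d2 := by
  obtain h | ⟨y, hy, hxy, hyd⟩ := ht.dominated hP hC hx d hd
  · exact absurd h hxd
  · exact hE hyd (ht.ext hP hy hd hd1 hxy hxd hxd1 hyd h1) h1
      (ht.ext hP hy hd hd2 hxy hxd hxd2 hyd h2) h2

/-- Both the neighbours and the non-neighbours of `x` in `C` induce matchings, so two colours
for each suffice. -/
lemma Tail.four_col [Finite V] (hE : EdgeTri G) (hP : NoP6 G) {C : Set V} {x p q : V}
    (ht : Tail G C x p q) (hC : Conn G C) (hx : ∃ u ∈ C, G.Adj x u) :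
    ∃ f : V → Bool × Bool, ProperOn G C f := by
  classical
  obtain ⟨f, hf⟩ := matching_two_col (G := G) {v | v ∈ C ∧ G.Adj x v}
    (fun v hv w hw w' hw' h h' => hE hv.2 hw.2 h hw'.2 h')
  obtain ⟨g, hg⟩ := matching_two_col (G := G) {v | v ∈ C ∧ ¬ G.Adj x v}
    (fun v hv w hw w' hw' h h' => ht.matching hE hP hC hx hv.1 hw.1 hw'.1 hv.2 hw.2 hw'.2 h h')
  refine ⟨fun v => if G.Adj x v then (true, f v) else (false, g v), fun u hu v hv huv => ?_⟩
  by_cases h1 : G.Adj x u <;> by_cases h2 : G.Adj x v <;> simp only [h1, h2, if_true, if_false]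
  · exact fun h => hf u ⟨hu, h1⟩ v ⟨hv, h2⟩ huv (Prod.ext_iff.1 h).2
  · simp
  · simp
  · exact fun h => hg u ⟨hu, h1⟩ v ⟨hv, h2⟩ huv (Prod.ext_iff.1 h).2

/-! ### Shortest odd closed walks -/

/-- A shortest odd closed walk has no chords. -/
lemma exists_odd_chordless {α : Type*} {H : SimpleGraph α} (h : ¬ H.Colorable 2) :
    ∃ (n : ℕ) (f : ℕ → α), Odd n ∧ f n = f 0 ∧ (∀ i < n, H.Adj (f i) (f (i + 1))) ∧
      ∀ i j, i < j → j < n → H.Adj (f i) (f j) → j = i + 1 ∨ (i = 0 ∧ j + 1 = n) := by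
  classical
  have hex : ∃ n, Odd n ∧ ∃ f : ℕ → α, f n = f 0 ∧ ∀ i < n, H.Adj (f i) (f (i + 1)) := by
    rw [two_colorable_iff_forall_loop_even] at h
    push Not at h
    obtain ⟨u, w, hw⟩ := h
    exact ⟨w.length, Nat.not_even_iff_odd.1 hw, w.getVert, by simp,
      fun i hi => w.adj_getVert_succ hi⟩
  obtain ⟨hodd, f, hclosed, hadj⟩ := Nat.find_spec hex
  have hmin := fun m hm => Nat.find_min hex (m := m) hm
  generalize Nat.find hex = n at *
  refine ⟨n, f, hodd, hclosed, hadj, fun i j hij hjn hch => ?_⟩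
  by_contra! hcon
  rcases Nat.even_or_odd (j - i) with he | ho
  · -- the stretch from `i` to `j` closed up by the chord
    refine hmin (j - i + 1) (by omega) ⟨he.add_one, fun k => if k ≤ j - i then f (i + k) else f i,
      by simp, fun k hk => ?_⟩
    by_cases hk2 : k + 1 ≤ j - i
    · have := hadj (i + k) (by omega)
      simp only [hk2, if_true, show k ≤ j - i by omega]
      exact this
    · have hk3 : i + k = j := by omega
      simp only [hk2, if_false, show k ≤ j - i by omega, if_true, hk3]
      exact hch.symm
  · -- the chord replaces the stretch from `i` to `j`
    refine hmin (n - (j - i - 1)) (by omega) ⟨?_, fun k => if k ≤ i then f k else f (k + (j - i - 1)),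
      ?_, fun k hk => ?_⟩
    · rw [Nat.odd_iff] at *
      omega
    · simp only [show ¬ (n - (j - i - 1) ≤ i) by omega, if_false, Nat.zero_le, if_true]
      rw [show n - (j - i - 1) + (j - i - 1) = n by omega, hclosed]
    · by_cases h1 : k + 1 ≤ i
      · simp only [h1, show k ≤ i by omega, if_true]
        exact hadj k (by omega)
      · by_cases h2 : k = i
        · subst h2
          simp only [le_refl, if_true, h1, if_false]
          rw [show k + 1 + (j - k - 1) = j by omega]
          exact hch
        · simp only [h1, show ¬ k ≤ i by omega, if_false]
          have := hadj (k + (j - i - 1)) (by omega)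
          rwa [show k + (j - i - 1) + 1 = k + 1 + (j - i - 1) by omega] at this

/-- A `P₆`-free graph without triangles and induced five-cycles is bipartite. -/
lemma bipartite_of (hP : NoP6 G) (W : Set V)
    (h3 : ∀ x ∈ W, ∀ y ∈ W, ∀ z ∈ W, G.Adj x y → G.Adj y z → G.Adj x z → False)
    (h5 : ∀ q : Fin 5 → V, (∀ i, q i ∈ W) → (∀ i, G.Adj (q i) (q (i + 1))) →
      (∀ i, ¬ G.Adj (q i) (q (i + 2))) → False) :
    ∃ f : V → Fin 2, ProperOn G W f := by
  refine properOn_of_colorable (n := 1) ?_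
  by_contra hcol
  obtain ⟨n, f, hodd, hclosed, hadj, hch⟩ := exists_odd_chordless hcol
  have hA : ∀ i < n, G.Adj (f i) (f (i + 1)) := fun i hi => by simpa using hadj i hi
  have hN : ∀ i j, i + 1 < j → j < n → ¬ (i = 0 ∧ j + 1 = n) → ¬ G.Adj (f i : V) (f j) := by
    intro i j hij hj hne hadj'
    rcases hch i j (by omega) hj (by simpa using hadj') with h | h
    · omega
    · exact hne h
  have hcases : n = 1 ∨ n = 3 ∨ n = 5 ∨ 7 ≤ n := by
    obtain ⟨k, rfl⟩ := hodd
    omega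
  rcases hcases with rfl | rfl | rfl | hn
  · have := hA 0 (by omega)
    rw [hclosed] at this
    exact G.irrefl this
  · refine h3 _ (f 0).2 _ (f 1).2 _ (f 2).2 (hA 0 (by omega)) (hA 1 (by omega)) ?_
    have := hA 2 (by omega)
    rw [hclosed] at this
    exact this.symm
  · have h4 := hA 4 (by omega)
    rw [hclosed] at h4
    refine h5 (fun i => f i) (fun i => (f i).2) ?_ ?_
    · intro i
      fin_cases i
      exacts [hA 0 (by omega), hA 1 (by omega), hA 2 (by omega), hA 3 (by omega), h4]
    · intro i
      fin_cases i
      exacts [hN 0 2 (by omega) (by omega) (by omega), hN 1 3 (by omega) (by omega) (by omega),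
        hN 2 4 (by omega) (by omega) (by omega),
        fun h => hN 0 3 (by omega) (by omega) (by omega) h.symm,
        fun h => hN 1 4 (by omega) (by omega) (by omega) h.symm]
  · apply hP (f 0) (f 1) (f 2) (f 3) (f 4) (f 5)
    any_goals exact hA _ (by omega)
    all_goals exact hN _ _ (by omega) (by omega) (by omega)

/-! ### The non-neighbours of an edge -/

/-- The vertices adjacent to neither end of the edge `ab`; `a` and `b` themselves are excluded
since they are adjacent to each other. -/
def Far (G : SimpleGraph V) (a b : V) : Set V := {v | ¬ G.Adj v a ∧ ¬ G.Adj v b}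

/-- The vertices outside the triangle `abc` adjacent to `a` or `b`. -/
def Near (G : SimpleGraph V) (a b c : V) : Set V :=
  {v | (G.Adj v a ∨ G.Adj v b) ∧ v ≠ a ∧ v ≠ b ∧ v ≠ c}

/-- A triangle `abc` of a critical graph satisfying the forbidden-subgraph hypotheses. -/
structure Setup (G : SimpleGraph V) (a b c : V) : Prop where
  hE : EdgeTri G
  hP : NoP6 G
  hc : Crit G
  ab : G.Adj a b
  ca : G.Adj c a
  cb : G.Adj c b

variable {a b c : V}

lemma Setup.swap (S : Setup G a b c) : Setup G b a c :=
  ⟨S.hE, S.hP, S.hc, S.ab.symm, S.cb, S.ca⟩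

lemma Setup.far_ne_near {v w : V} (hv : v ∈ Far G a b) (hw : w ∈ Near G a b c) : w ≠ v := by
  rintro rfl
  rcases hw.1 with h | h
  exacts [hv.1 h, hv.2 h]

lemma Setup.not_both (S : Setup G a b c) {x : V} (hx : x ∈ Near G a b c) (ha : G.Adj x a)
    (hb : G.Adj x b) : False :=
  hx.2.2.2 (S.hE S.ab ha.symm hb.symm S.ca.symm S.cb.symm)

lemma Setup.not_c (S : Setup G a b c) {x : V} (hx : x ∈ Near G a b c) : ¬ G.Adj x c := by
  intro h
  rcases hx.1 with ha | hb
  · exact hx.2.2.1 (S.hE S.ca h.symm ha.symm S.cb S.ab)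
  · exact hx.2.1 (S.hE S.cb h.symm hb.symm S.ca S.ab.symm)

lemma Setup.tail (S : Setup G a b c) {x : V} (hx : x ∈ Near G a b c) {C : Set V}
    (hC : C ⊆ Far G a b) : ∃ p q, Tail G C x p q := by
  rcases hx.1 with ha | hb
  · exact ⟨a, b, ha, S.ab, fun h => S.not_both hx ha h, hC⟩
  · exact ⟨b, a, hb, S.ab.symm, fun h => S.not_both hx h hb, fun v hv => ⟨(hC hv).2, (hC hv).1⟩⟩

lemma Setup.cover (v : V) : v = a ∨ v = b ∨ v = c ∨ v ∈ Near G a b c ∨ v ∈ Far G a b := by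
  simp only [Near, Far, Set.mem_ofPred_eq]
  tauto

lemma Setup.far_ne (S : Setup G a b c) {v : V} (hv : v ∈ Far G a b) : v ≠ a ∧ v ≠ b ∧ v ≠ c := by
  refine ⟨?_, ?_, ?_⟩ <;> rintro rfl
  exacts [hv.2 S.ab, hv.1 S.ab.symm, hv.1 S.ca]

/-- Neighbours of a component of `Far` lie in it, in `Near`, or are `c`. -/
lemma Setup.nbr_comp (S : Setup G a b c) {L : Set V} (hL : IsComp G (Far G a b) L) {l v : V}
    (hl : l ∈ L) (h : G.Adj l v) : v ∈ L ∨ v = c ∨ v ∈ Near G a b c := by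
  rcases Setup.cover (G := G) (a := a) (b := b) (c := c) v with rfl | rfl | rfl | hv | hv
  · exact absurd h (hL.sub hl).1
  · exact absurd h (hL.sub hl).2
  · exact Or.inr (Or.inl rfl)
  · exact Or.inr (Or.inr hv)
  · exact Or.inl (hL.closed l hl v hv h)

lemma Setup.exists_near (S : Setup G a b c) {L : Set V} (hL : IsComp G (Far G a b) L) :
    ∃ x ∈ Near G a b c, ∃ l ∈ L, G.Adj x l := by
  obtain ⟨r, hr⟩ := hL.ne
  obtain ⟨x, hx, y, hy, hyc, hxy⟩ := S.hc.no_cut (c := c) (w := a) hr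
    (fun h => (S.far_ne (hL.sub h)).2.2 rfl) (fun h => (S.far_ne (hL.sub h)).1 rfl) S.ca.ne'
  rcases S.nbr_comp hL hx hxy with h | h | h
  exacts [absurd h hy, absurd h hyc, ⟨y, h, x, hx, hxy.symm⟩]

/-! ### Triangles far from an edge -/

lemma Setup.tri_at_most (S : Setup G a b c) {x s1 s2 s3 : V} (hx : x ∈ Near G a b c)
    (h3 : s3 ∈ Far G a b) (h12 : G.Adj s1 s2) (h23 : G.Adj s2 s3)
    (h13 : G.Adj s1 s3) (hx1 : G.Adj x s1) : ¬ G.Adj x s2 := by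
  intro hx2
  exact Setup.far_ne_near h3 hx (S.hE h12 hx1.symm hx2.symm h13 h23)

/-- If `x` is attached to `s1`, the other two vertices of a far triangle have no further far
neighbours. -/
lemma Setup.tri_step (S : Setup G a b c) {L : Set V} (hL : IsComp G (Far G a b) L)
    {x s1 s2 s3 : V} (hx : x ∈ Near G a b c) (h1 : s1 ∈ L) (h2 : s2 ∈ L) (h3 : s3 ∈ L)
    (h12 : G.Adj s1 s2) (h23 : G.Adj s2 s3) (h13 : G.Adj s1 s3) (hx1 : G.Adj x s1) :
    (∀ v ∈ Far G a b, G.Adj s2 v → v = s1 ∨ v = s3) ∧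
      ∃ x' ∈ Near G a b c, G.Adj x' s2 := by
  have hx2 := S.tri_at_most hx (hL.sub h3) h12 h23 h13 hx1
  have hx3 := S.tri_at_most hx (hL.sub h2) h13 h23.symm h12 hx1
  obtain ⟨p, q, ht⟩ := S.tail hx hL.sub
  have hcl : ∀ v ∈ Far G a b, G.Adj s2 v → v = s1 ∨ v = s3 := by
    intro v hv hsv
    have hvL := hL.closed s2 h2 v hv hsv
    by_cases hxv : G.Adj x v
    · left
      exact S.hE h23 hsv (ht.ext S.hP hvL h2 h3 hxv hx2 hx3 hsv.symm h23).symm h12.symm h13.symm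
    · right
      exact ht.matching S.hE S.hP hL.conn ⟨s1, h1, hx1⟩ h2 hvL h3 hx2 hxv hx3 hsv h23
  refine ⟨hcl, ?_⟩
  obtain ⟨w, hw, hw1, hw3, hwc⟩ := S.hc.exists_nbr s2 s1 s3 c
  rcases S.nbr_comp hL h2 hw with h | h | h
  · rcases hcl w (hL.sub h) hw with h | h
    exacts [absurd h hw1, absurd h hw3]
  · exact absurd h hwc
  · exact ⟨w, h, hw.symm⟩

/-- A far triangle is a whole component of `Far`, and each of its vertices is attached to
`Near`. -/
lemma Setup.tri (S : Setup G a b c) {t1 t2 t3 : V} (h1 : t1 ∈ Far G a b) (h2 : t2 ∈ Far G a b)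
    (h3 : t3 ∈ Far G a b) (h12 : G.Adj t1 t2) (h23 : G.Adj t2 t3) (h13 : G.Adj t1 t3) :
    (∀ v ∈ Far G a b, G.Adj t1 v → v = t2 ∨ v = t3) ∧ ∃ x ∈ Near G a b c, G.Adj x t1 := by
  obtain ⟨L, hL, l1⟩ := exists_isComp h1
  have l2 := hL.closed t1 l1 t2 h2 h12
  have l3 := hL.closed t1 l1 t3 h3 h13
  obtain ⟨x, hx, l, hl, hxl⟩ := S.exists_near hL
  obtain ⟨p, q, ht⟩ := S.tail hx hL.sub
  have from2 : ∀ y ∈ Near G a b c, G.Adj y t2 →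
      (∀ v ∈ Far G a b, G.Adj t1 v → v = t2 ∨ v = t3) ∧ ∃ x ∈ Near G a b c, G.Adj x t1 :=
    fun y hy hyt => S.tri_step hL hy l2 l1 l3 h12.symm h13 h23 hyt
  by_cases hx1 : G.Adj x t1
  · obtain ⟨-, y, hy, hyt⟩ := S.tri_step hL hx l1 l2 l3 h12 h23 h13 hx1
    exact from2 y hy hyt
  by_cases hx2 : G.Adj x t2
  · exact from2 x hx hx2
  by_cases hx3 : G.Adj x t3
  · obtain ⟨-, y, hy, hyt⟩ := S.tri_step hL hx l3 l2 l1 h23.symm h12.symm h13.symm hx3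
    exact from2 y hy hyt
  · exact absurd (ht.matching S.hE S.hP hL.conn ⟨l, hl, hxl⟩ l1 l2 l3 hx1 hx2 hx3 h12 h13) h23.ne

/-- A neighbour `x` of `a` attached to the far triangle at `t1` is adjacent to every
neighbour `y` of `b` not attached at `t1`. -/
lemma Setup.tri_complete (S : Setup G a b c) {t1 t2 t3 x y : V} (h1 : t1 ∈ Far G a b)
    (h2 : t2 ∈ Far G a b) (h3 : t3 ∈ Far G a b) (h12 : G.Adj t1 t2) (h23 : G.Adj t2 t3)
    (h13 : G.Adj t1 t3) (hx : x ∈ Near G a b c) (hxa : G.Adj x a) (hxt : G.Adj x t1)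
    (hy : y ∈ Near G a b c) (hyb : G.Adj y b) (hyt : ¬ G.Adj y t1) : G.Adj x y := by
  by_contra hxy
  have hxb : ¬ G.Adj x b := fun h => S.not_both hx hxa h
  have hya : ¬ G.Adj y a := fun h => S.not_both hy h hyb
  have hx2 := S.tri_at_most hx h3 h12 h23 h13 hxt
  have hx3 := S.tri_at_most hx h2 h13 h23.symm h12 hxt
  -- otherwise `t - t1 - x - a - b - y` is an induced path
  have key : ∀ t ∈ Far G a b, G.Adj t1 t → ¬ G.Adj x t → G.Adj y t := by
    intro t ht h1t hxt'
    by_contra hyt'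
    exact S.hP t t1 x a b y h1t.symm hxt.symm hxa S.ab hyb.symm (fun h => hxt' h.symm) ht.1 ht.2
      (fun h => hyt' h.symm) h1.1 h1.2 (fun h => hyt h.symm) hxb hxy (fun h => hya h.symm)
  exact S.tri_at_most hy h1 h23 h13.symm h12.symm (key t2 h2 h12 hx2) (key t3 h3 h13 hx3)

/-- The vertices of `Near` adjacent to `a` form an independent set. -/
def Indep (G : SimpleGraph V) (a b c : V) : Prop :=
  ∀ x ∈ Near G a b c, ∀ y ∈ Near G a b c, G.Adj x a → G.Adj y a → ¬ G.Adj x y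

lemma near_swap {v : V} : v ∈ Near G b a c ↔ v ∈ Near G a b c := by
  simp only [Near, Set.mem_ofPred_eq]
  tauto

lemma far_swap {v : V} : v ∈ Far G b a ↔ v ∈ Far G a b := by
  simp only [Far, Set.mem_ofPred_eq]
  tauto

/-- If no neighbour of `a` is attached at `t1`, then some neighbour of `b` is, and it is
complete to `N(a)`. -/
lemma Setup.indep_of_none (S : Setup G a b c) {t1 t2 t3 : V} (h1 : t1 ∈ Far G a b)
    (h2 : t2 ∈ Far G a b) (h3 : t3 ∈ Far G a b) (h12 : G.Adj t1 t2) (h23 : G.Adj t2 t3)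
    (h13 : G.Adj t1 t3) (hno : ∀ x ∈ Near G a b c, G.Adj x a → ¬ G.Adj x t1) :
    Indep G a b c := by
  obtain ⟨-, x, hx, hxt⟩ := S.tri h1 h2 h3 h12 h23 h13
  have hxa : ¬ G.Adj x a := fun h => hno x hx h hxt
  have hxb : G.Adj x b := hx.1.resolve_left hxa
  intro y hy y' hy' hya hya' hyy
  have hxy : ∀ z ∈ Near G a b c, G.Adj z a → G.Adj x z := fun z hz hza =>
    S.swap.tri_complete (far_swap.2 h1) (far_swap.2 h2) (far_swap.2 h3) h12 h23 h13
      (near_swap.2 hx) hxb hxt (near_swap.2 hz) hza (hno z hz hza)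
  exact hx.2.1 (S.hE hyy (hxy y hy hya).symm (hxy y' hy' hya').symm hya hya')

/-- If every vertex of a far triangle is attached to `N(a)`, then `N(b)` is independent: the ends
of an edge in `N(b)` both avoid some vertex of the triangle. -/
lemma Setup.indep_of_all (S : Setup G a b c) {t1 t2 t3 : V} (h1 : t1 ∈ Far G a b)
    (h2 : t2 ∈ Far G a b) (h3 : t3 ∈ Far G a b) (h12 : G.Adj t1 t2) (h23 : G.Adj t2 t3)
    (h13 : G.Adj t1 t3) (e1 : ∃ x ∈ Near G a b c, G.Adj x a ∧ G.Adj x t1)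
    (e2 : ∃ x ∈ Near G a b c, G.Adj x a ∧ G.Adj x t2)
    (e3 : ∃ x ∈ Near G a b c, G.Adj x a ∧ G.Adj x t3) : Indep G b a c := by
  intro y hy y' hy' hyb hyb' hyy
  rw [near_swap] at hy hy'
  have fin : ∀ x ∈ Near G a b c, G.Adj x y → G.Adj x y' → x = b := fun x hx h h' =>
    S.hE hyy h.symm h'.symm hyb hyb'
  have k1 : G.Adj y t1 ∨ G.Adj y' t1 := by
    by_contra! h
    obtain ⟨x, hx, hxa, hxt⟩ := e1
    exact hx.2.2.1 (fin x hx
      (S.tri_complete h1 h2 h3 h12 h23 h13 hx hxa hxt hy hyb h.1)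
      (S.tri_complete h1 h2 h3 h12 h23 h13 hx hxa hxt hy' hyb' h.2))
  have k2 : G.Adj y t2 ∨ G.Adj y' t2 := by
    by_contra! h
    obtain ⟨x, hx, hxa, hxt⟩ := e2
    exact hx.2.2.1 (fin x hx
      (S.tri_complete h2 h1 h3 h12.symm h13 h23 hx hxa hxt hy hyb h.1)
      (S.tri_complete h2 h1 h3 h12.symm h13 h23 hx hxa hxt hy' hyb' h.2))
  have k3 : G.Adj y t3 ∨ G.Adj y' t3 := by
    by_contra! h
    obtain ⟨x, hx, hxa, hxt⟩ := e3
    exact hx.2.2.1 (fin x hx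
      (S.tri_complete h3 h1 h2 h13.symm h12 h23.symm hx hxa hxt hy hyb h.1)
      (S.tri_complete h3 h1 h2 h13.symm h12 h23.symm hx hxa hxt hy' hyb' h.2))
  have m12 := fun z hz => S.tri_at_most (x := z) hz h3 h12 h23 h13
  have m13 := fun z hz => S.tri_at_most (x := z) hz h2 h13 h23.symm h12
  have m23 := fun z hz => S.tri_at_most (x := z) hz h1 h23 h13.symm h12.symm
  rcases k1 with k1 | k1 <;> rcases k2 with k2 | k2 <;> rcases k3 with k3 | k3
  · exact m12 _ hy k1 k2
  · exact m12 _ hy k1 k2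
  · exact m13 _ hy k1 k3
  · exact m23 _ hy' k2 k3
  · exact m23 _ hy k2 k3
  · exact m13 _ hy' k1 k3
  · exact m12 _ hy' k1 k2
  · exact m12 _ hy' k1 k2

/-! ### Five-cycles far from an edge -/

/-- A vertex `x` of `Near` attached to a component `L` of `Far` meets every induced path `uvw`
in `L`, but not in all three vertices, and not only in the end `u`. -/
lemma Setup.c5_pattern (S : Setup G a b c) {L : Set V} (hL : IsComp G (Far G a b) L)
    {x : V} (hx : x ∈ Near G a b c) (hxL : ∃ l ∈ L, G.Adj x l) {u v w : V} (hu : u ∈ L)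
    (hv : v ∈ L) (hw : w ∈ L) (huv : G.Adj u v) (hvw : G.Adj v w) (huw : ¬ G.Adj u w)
    (hne : u ≠ w) :
    ¬ (¬ G.Adj x v ∧ ¬ G.Adj x w) ∧ ¬ (G.Adj x u ∧ G.Adj x v ∧ G.Adj x w) := by
  obtain ⟨p, q, ht⟩ := S.tail hx hL.sub
  refine ⟨fun ⟨h2, h3⟩ => ?_, fun ⟨h1, h2, h3⟩ => hne (S.hE h2 h1.symm.symm huv.symm h3 hvw)⟩
  by_cases h1 : G.Adj x u
  · exact huw (ht.ext S.hP hu hv hw h1 h2 h3 huv hvw)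
  · exact hne (ht.matching S.hE S.hP hL.conn hxL hv hu hw h2 h1 h3 huv.symm hvw)

/-- Two vertex covers of a five-cycle share a vertex, and one of them contains a neighbour of it. -/
lemma bool_c5 : ∀ x0 x1 x2 x3 x4 y0 y1 y2 y3 y4 : Bool,
    (x0 || x1) → (x1 || x2) → (x2 || x3) → (x3 || x4) → (x4 || x0) →
    (y0 || y1) → (y1 || y2) → (y2 || y3) → (y3 || y4) → (y4 || y0) →
    ((x0 && y0 && (x1 || x4)) || (x1 && y1 && (x2 || x0)) || (x2 && y2 && (x3 || x1)) ||
      (x3 && y3 && (x4 || x2)) || (x4 && y4 && (x0 || x3)) ||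
      (x0 && y0 && (y1 || y4)) || (x1 && y1 && (y2 || y0)) || (x2 && y2 && (y3 || y1)) ||
      (x3 && y3 && (y4 || y2)) || (x4 && y4 && (y0 || y3))) := by
  decide

/-- An induced five-cycle in `Far` would make `G` 5-colourable: its attachments in `Near` together
with `c` form one colour class, and the rest is 4-colourable. -/
lemma Setup.no_c5 [Finite V] (S : Setup G a b c) (q : Fin 5 → V) (hq : ∀ i, q i ∈ Far G a b)
    (hadj : ∀ i, G.Adj (q i) (q (i + 1))) (hnon : ∀ i, ¬ G.Adj (q i) (q (i + 2))) : False := by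
  classical
  obtain ⟨L, hL, l0⟩ := exists_isComp (hq 0)
  have l1 := hL.closed _ l0 _ (hq 1) (hadj 0)
  have l2 := hL.closed _ l1 _ (hq 2) (hadj 1)
  have l3 := hL.closed _ l2 _ (hq 3) (hadj 2)
  have l4 := hL.closed _ l3 _ (hq 4) (hadj 3)
  have hqL : ∀ i, q i ∈ L := by
    intro i
    fin_cases i
    exacts [l0, l1, l2, l3, l4]
  set X : Set V := {x | x ∈ Near G a b c ∧ ∃ l ∈ L, G.Adj x l} with hX
  have pat : ∀ x ∈ X, ∀ i, (G.Adj x (q i) ∨ G.Adj x (q (i + 1))) ∧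
      ¬ (G.Adj x (q i) ∧ G.Adj x (q (i + 1)) ∧ G.Adj x (q (i + 2))) := by
    intro x hx i
    have e2 : i + 1 + 1 = i + 2 := by rw [add_assoc]; rfl
    have e4 : i + 4 + 1 = i := by rw [add_assoc]; exact add_zero i
    have e5 : i + 4 + 2 = i + 1 := by rw [add_assoc]; rfl
    have hne : ∀ j, q j ≠ q (j + 2) := by
      intro j h
      have e3 : j + 2 + 1 = j + 3 := by rw [add_assoc]; rfl
      have e30 : j + 3 + 2 = j := by rw [add_assoc]; exact add_zero j
      have h1 := hadj (j + 2)
      have h2 := hnon (j + 3)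
      rw [← h, e3] at h1
      rw [e30] at h2
      exact h2 h1.symm
    constructor
    · have h1 := hadj (i + 4)
      have h2 := hnon (i + 4)
      have h3 := hne (i + 4)
      rw [e4] at h1
      rw [e5] at h2 h3
      have := (S.c5_pattern hL hx.1 hx.2 (hqL (i + 4)) (hqL i) (hqL (i + 1)) h1 (hadj i) h2
        h3).1
      tauto
    · exact (S.c5_pattern hL hx.1 hx.2 (hqL i) (hqL (i + 1)) (hqL (i + 2)) (hadj i)
        (e2 ▸ hadj (i + 1)) (hnon i) (hne i)).2
  -- the neighbours of `L` form an independent set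
  have hXX : ∀ x ∈ X, ∀ y ∈ X, ¬ G.Adj x y := by
    intro x hx y hy hxy
    have tri : ∀ i j, G.Adj (q i) (q j) → G.Adj x (q i) → G.Adj y (q i) →
        ¬ G.Adj x (q j) ∧ ¬ G.Adj y (q j) := fun i j hij h1 h2 =>
      ⟨fun h => Setup.far_ne_near (hq j) hy.1 (S.hE h1 hxy h2.symm h hij),
        fun h => Setup.far_ne_near (hq j) hx.1 (S.hE h2 hxy.symm h1.symm h hij)⟩
    have B := bool_c5 (decide (G.Adj x (q 0))) (decide (G.Adj x (q 1))) (decide (G.Adj x (q 2)))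
      (decide (G.Adj x (q 3))) (decide (G.Adj x (q 4))) (decide (G.Adj y (q 0)))
      (decide (G.Adj y (q 1))) (decide (G.Adj y (q 2))) (decide (G.Adj y (q 3)))
      (decide (G.Adj y (q 4)))
    simp only [Bool.or_eq_true, Bool.and_eq_true, decide_eq_true_eq] at B
    have B' := B (pat x hx 0).1 (pat x hx 1).1 (pat x hx 2).1 (pat x hx 3).1 (pat x hx 4).1
      (pat y hy 0).1 (pat y hy 1).1 (pat y hy 2).1 (pat y hy 3).1 (pat y hy 4).1
    have t01 := tri 0 1 (hadj 0)
    have t12 := tri 1 2 (hadj 1)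
    have t23 := tri 2 3 (hadj 2)
    have t34 := tri 3 4 (hadj 3)
    have t40 := tri 4 0 (hadj 4)
    have t10 := tri 1 0 (hadj 0).symm
    have t21 := tri 2 1 (hadj 1).symm
    have t32 := tri 3 2 (hadj 2).symm
    have t43 := tri 4 3 (hadj 3).symm
    have t04 := tri 0 4 (hadj 4).symm
    clear B pat tri
    grind
  have hcX : ∀ x ∈ X, ¬ G.Adj x c := fun x hx => S.not_c hx.1
  -- each component of the rest is attached to some `x ∈ X` that has a tail elsewhere
  obtain ⟨f, hf⟩ := properOn_of_comps (G := G) (α := Bool × Bool) {v | v ∉ X ∧ v ≠ c} (by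
    intro C hC
    obtain ⟨r, hr⟩ := hC.ne
    have hstep : ∀ u ∈ L, ∀ v, v ∉ X → v ≠ c → G.Adj u v → v ∈ L := by
      intro u hu v hvX hvc huv
      rcases S.nbr_comp hL hu huv with h | h | h
      exacts [h, absurd h hvc, absurd ⟨h, u, hu, huv.symm⟩ hvX]
    have hdich : C ⊆ L ∨ ∀ v ∈ C, v ∉ L := by
      by_cases h : ∃ u ∈ C, u ∈ L
      · exact Or.inl (hC.conn (· ∈ L) h fun u _ v hv huv hul =>
          hstep u hul v (hC.sub hv).1 (hC.sub hv).2 huv)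
      · push Not at h
        exact Or.inr h
    have hw : ∃ w, w ∉ C ∧ w ≠ c := by
      rcases hdich with h | h
      · exact ⟨a, fun ha => (S.far_ne (hL.sub (h ha))).1 rfl, S.ca.ne'⟩
      · exact ⟨q 0, fun h0 => h _ h0 l0, (S.far_ne (hq 0)).2.2⟩
    obtain ⟨w, hwC, hwc⟩ := hw
    obtain ⟨u, hu, x, hxC, hxc, hux⟩ := S.hc.no_cut hr (fun h => (hC.sub h).2 rfl) hwC hwc
    have hxX : x ∈ X := by
      by_contra h
      exact hxC (hC.closed u hu x ⟨h, hxc⟩ hux)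
    have ht : ∃ p q, Tail G C x p q := by
      rcases hdich with h | h
      · exact S.tail hxX.1 (h.trans hL.sub)
      · have hfar : ∀ v ∈ C, ∀ i, ¬ G.Adj v (q i) := fun v hv i hvi =>
          h v hv (hstep _ (hqL i) v (hC.sub hv).1 (hC.sub hv).2 hvi.symm)
        have mk : ∀ i j, G.Adj (q i) (q j) → G.Adj x (q i) → ¬ G.Adj x (q j) →
            ∃ p q, Tail G C x p q := fun i j hij h1 h2 =>
          ⟨q i, q j, h1, hij, h2, fun v hv => ⟨hfar v hv i, hfar v hv j⟩⟩
        have p0 : _ ∧ ¬ (_ ∧ _ ∧ G.Adj x (q 2)) := pat x hxX 0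
        by_cases x0 : G.Adj x (q 0)
        · by_cases x1 : G.Adj x (q 1)
          · exact mk 1 2 (hadj 1) x1 fun x2 => p0.2 ⟨x0, x1, x2⟩
          · exact mk 0 1 (hadj 0) x0 x1
        · exact mk 1 0 (hadj 0).symm (p0.1.resolve_left x0) x0
    obtain ⟨p, q', ht⟩ := ht
    exact ht.four_col S.hE S.hP hC.conn ⟨u, hu, hux.symm⟩)
  refine S.hc.false_of_coloring (α := Option (Bool × Bool)) (by simp)
    (fun v => if v ∉ X ∧ v ≠ c then some (f v) else none) fun u v huv => ?_
  by_cases h1 : u ∉ X ∧ u ≠ c <;> by_cases h2 : v ∉ X ∧ v ≠ c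
  · simp only [if_pos h1, if_pos h2]
    exact fun h => hf u h1 v h2 huv (Option.some_injective _ h)
  · simp only [if_pos h1, if_neg h2]
    simp
  · simp only [if_neg h1, if_pos h2]
    simp
  · exfalso
    have h1' : u ∈ X ∨ u = c := by tauto
    have h2' : v ∈ X ∨ v = c := by tauto
    rcases h1' with hu | rfl <;> rcases h2' with hv | rfl
    · exact hXX u hu v hv huv
    · exact hcX u hu huv
    · exact hcX v hv huv.symm
    · exact G.irrefl huv

/-! ### Colouring the whole graph -/

/-- Given a proper 3-colouring of `Near`, colour `a`, `b` and a bipartite part of `Far` with two new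
colours; one vertex of each far triangle has to take the colour `0`. -/
lemma Setup.extend [Finite V] (S : Setup G a b c) (φ : V → Fin 3)
    (hφ : ProperOn G (Near G a b c) φ)
    (htri : ∀ x ∈ Far G a b, ∀ y ∈ Far G a b, ∀ z ∈ Far G a b, G.Adj x y → G.Adj y z →
      G.Adj x z → ∃ t, (t = x ∨ t = y ∨ t = z) ∧ ∀ v ∈ Near G a b c, G.Adj t v → φ v ≠ 0) :
    False := by
  classical
  -- a maximal independent set of far vertices that can take the colour `0`; it meets every far
  -- triangle
  let 𝓘 : Set (Set V) := {I | (∀ t ∈ I, t ∈ Far G a b ∧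
    (∀ v ∈ Near G a b c, G.Adj t v → φ v ≠ 0)) ∧ ∀ t ∈ I, ∀ t' ∈ I, ¬ G.Adj t t'}
  obtain ⟨I, hI⟩ := (Set.toFinite 𝓘).exists_maximal ⟨∅, by simp [𝓘]⟩
  have hI1 := hI.prop.1
  have hI2 := hI.prop.2
  obtain ⟨g, hg⟩ := bipartite_of S.hP {v | v ∈ Far G a b ∧ v ∉ I} (by
    intro x hx y hy z hz hxy hyz hxz
    obtain ⟨t, ht, htφ⟩ := htri x hx.1 y hy.1 z hz.1 hxy hyz hxz
    have htF : t ∈ Far G a b ∧ t ∉ I ∧ ∀ s ∈ I, ¬ G.Adj t s := by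
      rcases ht with rfl | rfl | rfl
      · refine ⟨hx.1, hx.2, fun s hs hts => ?_⟩
        rcases (S.tri hx.1 hy.1 hz.1 hxy hyz hxz).1 s (hI1 s hs).1 hts with rfl | rfl
        exacts [hy.2 hs, hz.2 hs]
      · refine ⟨hy.1, hy.2, fun s hs hts => ?_⟩
        rcases (S.tri hy.1 hx.1 hz.1 hxy.symm hxz hyz).1 s (hI1 s hs).1 hts with rfl | rfl
        exacts [hx.2 hs, hz.2 hs]
      · refine ⟨hz.1, hz.2, fun s hs hts => ?_⟩
        rcases (S.tri hz.1 hx.1 hy.1 hxz.symm hxy hyz.symm).1 s (hI1 s hs).1 hts with rfl | rfl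
        exacts [hx.2 hs, hy.2 hs]
    have hmem : insert t I ∈ 𝓘 := by
      refine ⟨?_, ?_⟩
      · rintro s (rfl | hs)
        exacts [⟨htF.1, htφ⟩, hI1 s hs]
      · rintro s (rfl | hs) s' (rfl | hs')
        exacts [G.irrefl, htF.2.2 s' hs', fun h => htF.2.2 s hs h.symm, hI2 s hs s' hs']
    exact htF.2.1 (hI.le_of_ge hmem (Set.subset_insert t I) (Set.mem_insert t I)))
    (fun q hq h1 h2 => S.no_c5 q (fun i => (hq i).1) h1 h2)
  let F : V → Fin 3 ⊕ Fin 2 := fun v =>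
    if v = a then Sum.inr 0 else if v = b then Sum.inr 1 else if v = c then Sum.inl 1
    else if v ∈ Near G a b c then Sum.inl (φ v) else if v ∈ I then Sum.inl 0 else Sum.inr (g v)
  have Fa : F a = Sum.inr 0 := by simp [F]
  have Fb : F b = Sum.inr 1 := by simp [F, S.ab.ne']
  have Fc : F c = Sum.inl 1 := by simp [F, S.ca.ne, S.cb.ne]
  have FN : ∀ v ∈ Near G a b c, F v = Sum.inl (φ v) := fun v hv => by
    simp only [F, hv.2.1, hv.2.2.1, hv.2.2.2, hv, if_true, if_false]
  have hFN : ∀ v ∈ Far G a b, v ∉ Near G a b c := fun v hv h => Setup.far_ne_near hv h rfl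
  have FI : ∀ v ∈ I, F v = Sum.inl 0 := fun v hv => by
    have h := S.far_ne (hI1 v hv).1
    simp only [F, h.1, h.2.1, h.2.2, hFN v (hI1 v hv).1, hv, if_true, if_false]
  have FH : ∀ v ∈ Far G a b, v ∉ I → F v = Sum.inr (g v) := fun v hv hvI => by
    have h := S.far_ne hv
    simp only [F, h.1, h.2.1, h.2.2, hFN v hv, hvI, if_false]
  have cover : ∀ v, (v = a ∧ F v = Sum.inr 0) ∨ (v = b ∧ F v = Sum.inr 1) ∨
      (v = c ∧ F v = Sum.inl 1) ∨ (v ∈ Near G a b c ∧ F v = Sum.inl (φ v)) ∨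
      (v ∈ I ∧ F v = Sum.inl 0) ∨ ((v ∈ Far G a b ∧ v ∉ I) ∧ F v = Sum.inr (g v)) := by
    intro v
    rcases Setup.cover (G := G) (a := a) (b := b) (c := c) v with h | h | h | h | h
    · exact Or.inl ⟨h, h ▸ Fa⟩
    · exact Or.inr (Or.inl ⟨h, h ▸ Fb⟩)
    · exact Or.inr (Or.inr (Or.inl ⟨h, h ▸ Fc⟩))
    · exact Or.inr (Or.inr (Or.inr (Or.inl ⟨h, FN v h⟩)))
    · by_cases hvI : v ∈ I
      · exact Or.inr (Or.inr (Or.inr (Or.inr (Or.inl ⟨hvI, FI v hvI⟩))))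
      · exact Or.inr (Or.inr (Or.inr (Or.inr (Or.inr ⟨⟨h, hvI⟩, FH v h hvI⟩))))
  refine S.hc.false_of_coloring (α := Fin 3 ⊕ Fin 2) (by simp) F fun u v huv => ?_
  have irr : ∀ w, u = w → v = w → False := fun w hu hv => huv.ne (hu.trans hv.symm)
  rcases cover u with ⟨hu, eu⟩ | ⟨hu, eu⟩ | ⟨hu, eu⟩ | ⟨hu, eu⟩ | ⟨hu, eu⟩ | ⟨hu, eu⟩ <;>
    rcases cover v with ⟨hv, ev⟩ | ⟨hv, ev⟩ | ⟨hv, ev⟩ | ⟨hv, ev⟩ | ⟨hv, ev⟩ | ⟨hv, ev⟩ <;>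
    rw [eu, ev]
  -- pairs whose colours are constants or come from different palettes
  all_goals first
    | exact Sum.inl_ne_inr
    | exact Sum.inr_ne_inl
    | exact absurd (irr _ hu hv) id
    | decide
    | skip
  · exact absurd huv.symm (hu ▸ hv.1.1)
  · exact absurd huv.symm (hu ▸ hv.1.2)
  · exact absurd huv.symm (hu ▸ S.not_c hv)
  · exact absurd huv (hv ▸ S.not_c hu)
  · exact fun h => hφ u hu v hv huv (Sum.inl_injective h)
  · exact fun h => (hI1 v hv).2 u hu huv.symm (Sum.inl_injective h)
  · exact fun h => (hI1 u hu).2 v hv huv (Sum.inl_injective h).symm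
  · exact absurd huv (hI2 u hu v hv)
  · exact absurd huv (hv ▸ hu.1.1)
  · exact absurd huv (hv ▸ hu.1.2)
  · exact fun h => hg u hu v hv huv (Sum.inr_injective h)

/-- If only `N(a)` is independent, it takes the colour `0` and the matching in `N(b)` the other two
colours: every far triangle has a vertex not attached to `N(a)`. -/
lemma Setup.final_of_indep [Finite V] (S : Setup G a b c) (hA : Indep G a b c)
    (hB : ¬ Indep G b a c) : False := by
  classical
  obtain ⟨g, hg⟩ := matching_two_col (G := G) {v | G.Adj v b}
    (fun v hv w hw w' hw' h h' => S.hE hv h hw.symm h' hw'.symm)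
  refine S.extend (fun v => if G.Adj v a then 0 else if g v then 1 else 2)
    (fun u hu v hv huv => ?_) fun x hx y hy z hz hxy hyz hxz => ?_
  · by_cases h1 : G.Adj u a <;> by_cases h2 : G.Adj v a
    · exact absurd huv (hA u hu v hv h1 h2)
    · simp only [h1, h2, if_true, if_false]
      split_ifs <;> decide
    · simp only [h1, h2, if_true, if_false]
      split_ifs <;> decide
    · have h := hg u (hu.1.resolve_left h1) v (hv.1.resolve_left h2) huv
      revert h
      simp only [h1, h2, if_false]
      generalize g u = p
      generalize g v = q
      revert p q
      decide
  · have good : ∀ t, (¬ ∃ v ∈ Near G a b c, G.Adj v a ∧ G.Adj v t) → ∀ v ∈ Near G a b c,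
        G.Adj t v → (if G.Adj v a then (0 : Fin 3) else if g v then 1 else 2) ≠ 0 := by
      intro t ht v hv htv
      have hva : ¬ G.Adj v a := fun h => ht ⟨v, hv, h, htv.symm⟩
      simp only [hva, if_false]
      split_ifs <;> decide
    by_cases e1 : ∃ v ∈ Near G a b c, G.Adj v a ∧ G.Adj v x
    · by_cases e2 : ∃ v ∈ Near G a b c, G.Adj v a ∧ G.Adj v y
      · by_cases e3 : ∃ v ∈ Near G a b c, G.Adj v a ∧ G.Adj v z
        · exact absurd (S.indep_of_all hx hy hz hxy hyz hxz e1 e2 e3) hB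
        · exact ⟨z, Or.inr (Or.inr rfl), good z e3⟩
      · exact ⟨y, Or.inr (Or.inl rfl), good y e2⟩
    · exact ⟨x, Or.inl rfl, good x e1⟩

/-- A far triangle forces `N(a)` or `N(b)` to be independent. -/
lemma Setup.indep_or (S : Setup G a b c) {x y z : V} (hx : x ∈ Far G a b) (hy : y ∈ Far G a b)
    (hz : z ∈ Far G a b) (hxy : G.Adj x y) (hyz : G.Adj y z) (hxz : G.Adj x z) :
    Indep G a b c ∨ Indep G b a c := by
  by_cases e1 : ∃ v ∈ Near G a b c, G.Adj v a ∧ G.Adj v x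
  · by_cases e2 : ∃ v ∈ Near G a b c, G.Adj v a ∧ G.Adj v y
    · by_cases e3 : ∃ v ∈ Near G a b c, G.Adj v a ∧ G.Adj v z
      · exact Or.inr (S.indep_of_all hx hy hz hxy hyz hxz e1 e2 e3)
      · exact Or.inl (S.indep_of_none hz hx hy hxz.symm hxy hyz.symm
          fun v hv hva hvt => e3 ⟨v, hv, hva, hvt⟩)
    · exact Or.inl (S.indep_of_none hy hx hz hxy.symm hxz hyz
        fun v hv hva hvt => e2 ⟨v, hv, hva, hvt⟩)
  · exact Or.inl (S.indep_of_none hx hy hz hxy hyz hxz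
      fun v hv hva hvt => e1 ⟨v, hv, hva, hvt⟩)

/-- `N(a) ∪ N(b)` has no proper 3-colouring. The given colouring itself is only needed when there
are no far triangles; otherwise the colouring is chosen afresh. -/
lemma Setup.final [Finite V] (S : Setup G a b c) (φ : V → Fin 3)
    (hφ : ProperOn G (Near G a b c) φ) : False := by
  classical
  by_cases hA : Indep G a b c
  · by_cases hB : Indep G b a c
    · refine S.extend (fun v => if G.Adj v a then 1 else 2) (fun u hu v hv huv => ?_)
        fun x _ y _ z _ _ _ _ => ⟨x, Or.inl rfl, fun v _ _ => ?_⟩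
      · by_cases h1 : G.Adj u a <;> by_cases h2 : G.Adj v a <;>
          simp only [h1, h2, if_true, if_false]
        · exact absurd huv (hA u hu v hv h1 h2)
        · decide
        · decide
        · exact absurd huv (hB u (near_swap.2 hu) v (near_swap.2 hv) (hu.1.resolve_left h1)
            (hv.1.resolve_left h2))
      · split_ifs <;> decide
    · exact S.final_of_indep hA hB
  · by_cases hB : Indep G b a c
    · exact S.swap.final_of_indep hB hA
    · exact S.extend φ hφ fun x hx y hy z hz hxy hyz hxz =>
        ((S.indep_or hx hy hz hxy hyz hxz).elim hA hB).elim

end SixCritical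

/-- Let `G` be a 6-vertex-critical (P₆, diamond)-free graph with clique number 3,
let `A = {a₁, a₂, a₃}` be a triangle in `G`, and `B_i` the set of vertices outside
`A` adjacent to `a_i`. Then for each `i`, the subgraph of `G` induced by
`(B₁ ∪ B₂ ∪ B₃) \ B_i` is triangle-free and not 3-colourable. -/
theorem six_critical_trianglefree_not3colorable {V : Type*} [Fintype V]
    (G : SimpleGraph V) (hG : P6DiamondFree G) (hcrit : IsVertexCritical 6 G)
    (hclique : G.cliqueNum = 3) (a : Fin 3 → V) (hainj : Function.Injective a)
    (haclique : ∀ i j, i ≠ j → G.Adj (a i) (a j)) (i : Fin 3) :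
    (G.induce ((⋃ j, Bset G a j) \ Bset G a i)).CliqueFree 3 ∧
      ¬ (G.induce ((⋃ j, Bset G a j) \ Bset G a i)).Colorable 3 := by
  have hk : G.CliqueFree 4 := by
    intro s hs
    have h := hs.isClique.card_le_cliqueNum
    rw [hs.card_eq, hclique] at h
    omega
  have hE := SixCritical.edgeTri_of hG.2 hk
  obtain ⟨j, k, hjk, hij, hik, hcov⟩ : ∃ j k : Fin 3, j ≠ k ∧ i ≠ j ∧ i ≠ k ∧
      ∀ l, l = i ∨ l = j ∨ l = k := by
    revert i
    decide
  have S : SixCritical.Setup G (a j) (a k) (a i) :=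
    ⟨hE, SixCritical.noP6_of hG.1, SixCritical.crit_of hcrit, haclique _ _ hjk, haclique _ _ hij,
      haclique _ _ hik⟩
  have hmem : ∀ v ∈ (⋃ l, Bset G a l) \ Bset G a i,
      v ∉ Set.range a ∧ (G.Adj v (a j) ∨ G.Adj v (a k)) := by
    rintro v ⟨hv, hvi⟩
    obtain ⟨l, hr, hl⟩ := Set.mem_iUnion.1 hv
    refine ⟨hr, ?_⟩
    rcases hcov l with rfl | rfl | rfl
    exacts [absurd ⟨hr, hl⟩ hvi, Or.inl hl, Or.inr hl]
  refine ⟨?_, fun hcol => ?_⟩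
  · -- two vertices of a triangle are joined to the same `a l`, which then completes a diamond
    have two : ∀ x y z l, z ∉ Set.range a → G.Adj x y → G.Adj x z → G.Adj y z →
        G.Adj x (a l) → G.Adj y (a l) → False := fun x y z l hz hxy hxz hyz hx hy =>
      hz ⟨l, hE hxy hx hy hxz hyz⟩
    classical
    intro s hs
    obtain ⟨x, y, z, hxy, hxz, hyz, -⟩ := SimpleGraph.is3Clique_iff.1 hs
    have hxy : G.Adj x y := by simpa using hxy
    have hxz : G.Adj x z := by simpa using hxz
    have hyz : G.Adj y z := by simpa using hyz
    obtain ⟨rx, hx⟩ := hmem x x.2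
    obtain ⟨ry, hy⟩ := hmem y y.2
    obtain ⟨rz, hz⟩ := hmem z z.2
    have p := fun l => two x y z l rz hxy hxz hyz
    have q := fun l => two x z y l ry hxz hxy hyz.symm
    have r := fun l => two y z x l rx hyz hxy.symm hxz.symm
    rcases hx with hx | hx <;> rcases hy with hy | hy <;> rcases hz with hz | hz
    exacts [p _ hx hy, p _ hx hy, q _ hx hz, r _ hy hz, r _ hy hz, q _ hx hz, p _ hx hy,
      p _ hx hy]
  · obtain ⟨φ, hφ⟩ := SixCritical.properOn_of_colorable (n := 2) hcol
    have hsub : ∀ v ∈ SixCritical.Near G (a j) (a k) (a i),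
        v ∈ (⋃ l, Bset G a l) \ Bset G a i := by
      intro v hv
      have hr : v ∉ Set.range a := by
        rintro ⟨l, rfl⟩
        rcases hcov l with rfl | rfl | rfl
        exacts [hv.2.2.2 rfl, hv.2.1 rfl, hv.2.2.1 rfl]
      refine ⟨Set.mem_iUnion.2 ?_, fun h => S.not_c hv h.2⟩
      rcases hv.1 with h | h
      exacts [⟨j, hr, h⟩, ⟨k, hr, h⟩]
    exact S.final φ fun u hu v hv => hφ u (hsub u hu) v (hsub v hv)
end
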